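/- arXiv:0812.1752 — 6 statements merged into one kernel-verified Lean document; each statement's English description precedes it below -/
import Mathlib

section
/- Let K ≥ 1 and let a = (a_0, a_1, ..., a_K) be a nonzero vector of real numbers. Define the cosine polynomials C_a(x) = ∑_{k=0}^{K} a_k cos(kx) and C_ā(x) = ∑_{k=0}^{K} a_{K-k} cos(kx) (the polynomial with coefficients in reverse order). Then Z(C_a) + Z(C_ā) ≥ 2K, where Z(f) denotes the number of zeros of f in one period [0, 2π), counted with multiplicity. -/
open Real Set
open scoped ENNReal

/-- The multiplicity of a zero `x` of `f`: the least `n ≥ 1` such that the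
`n`-th derivative of `f` at `x` is nonzero. -/
noncomputable def zeroMult (f : ℝ → ℝ) (x : ℝ) : ℕ :=
  sInf {n : ℕ | 1 ≤ n ∧ iteratedDeriv n f x ≠ 0}

/-- The number of zeros of `f` in one period `[0, 2π)`, counted with multiplicity. -/
noncomputable def Zcount (f : ℝ → ℝ) : ℝ≥0∞ :=
  ∑' x : {x : ℝ // x ∈ Set.Ico (0 : ℝ) (2 * Real.pi) ∧ f x = 0},
    (zeroMult f x.1 : ℝ≥0∞)

/-- Real amplitude / continuous phase decomposition with total phase increase `N π`. -/
def PhaseDec (F : ℝ → ℂ) (N : ℕ) : Prop :=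
  ∃ (s φ : ℝ → ℝ), Continuous φ ∧ φ (2 * π) = φ 0 + N * π ∧
    ∀ x, F x = (s x : ℂ) * Complex.exp (φ x * Complex.I)

lemma PhaseDec.mul {F G : ℝ → ℂ} {M N : ℕ} (hF : PhaseDec F M) (hG : PhaseDec G N) :
    PhaseDec (fun x => F x * G x) (M + N) := by
  obtain ⟨s, φ, h1, h2, h3⟩ := hF
  obtain ⟨t, ψ, k1, k2, k3⟩ := hG
  refine ⟨fun x => s x * t x, fun x => φ x + ψ x, h1.add k1, ?_, ?_⟩
  · simp only [h2, k2]; push_cast; ring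
  · intro x
    simp only [h3, k3]
    push_cast
    rw [add_mul, Complex.exp_add]; ring

lemma phaseDec_const (c : ℂ) : PhaseDec (fun _ => c) 0 := by
  refine ⟨fun _ => ‖c‖, fun _ => c.arg, continuous_const, by simp, fun x => ?_⟩
  simp [Complex.norm_mul_exp_arg_mul_I]

lemma phaseDec_one_sub (g : ℝ → ℂ) (hg : Continuous g) (hp : g (2 * π) = g 0)
    (h : ∀ x, ‖g x‖ < 1) : PhaseDec (fun x => 1 - g x) 0 := by
  refine ⟨fun x => ‖1 - g x‖, fun x => (1 - g x).arg, ?_, by simp [hp], fun x => ?_⟩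
  · rw [continuous_iff_continuousAt]
    intro x
    refine ContinuousAt.comp (f := fun x => 1 - g x) (Complex.continuousAt_arg ?_)
      (by fun_prop)
    left
    have := (Complex.re_le_norm (g x)).trans_lt (h x)
    simp; linarith
  · simp [Complex.norm_mul_exp_arg_mul_I]

lemma phaseDec_factor (w : ℂ) :
    ∃ N ≤ 2, PhaseDec (fun x => Complex.exp (x * Complex.I) - w) N := by
  have hn : ∀ x : ℝ, ‖Complex.exp (x * Complex.I)‖ = 1 := Complex.norm_exp_ofReal_mul_I
  have hper : Complex.exp ((2 * π : ℝ) * Complex.I) = 1 := by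
    push_cast; exact Complex.exp_two_pi_mul_I
  rcases lt_trichotomy ‖w‖ 1 with hw | hw | hw
  · refine ⟨2, le_rfl, ?_⟩
    have h1 : PhaseDec (fun x => Complex.exp (x * Complex.I)) 2 :=
      ⟨fun _ => 1, fun x => x, continuous_id, by simp, fun x => by simp⟩
    have h2 := phaseDec_one_sub (fun x => w * Complex.exp (-(x * Complex.I))) (by fun_prop)
      (by simp [Complex.exp_neg, hper]) (fun x => by simp [Complex.exp_neg, hn, hw])
    have h3 := h1.mul h2
    simp only [add_zero] at h3
    convert h3 using 2 with x
    rw [Complex.exp_neg]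
    field_simp [Complex.exp_ne_zero]
  · refine ⟨1, by norm_num, fun x => 2 * sin ((x - w.arg) / 2),
      fun x => (x + w.arg) / 2 + π / 2, by fun_prop, by push_cast; ring, fun x => ?_⟩
    have hw' : w = Complex.exp (w.arg * Complex.I) := by
      have := Complex.norm_mul_exp_arg_mul_I w
      rw [hw] at this; simpa using this.symm
    generalize w.arg = α at hw' ⊢
    subst hw'
    push_cast
    have e1 : Complex.exp (((x + α) / 2 + π / 2 : ℂ) * Complex.I)
        = Complex.exp ((x / 2) * Complex.I) * Complex.exp ((α / 2) * Complex.I) * Complex.I := by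
      rw [← Complex.exp_add, add_mul, Complex.exp_add, Complex.exp_pi_div_two_mul_I]
      congr 2; ring
    rw [e1, Complex.sin]
    have e2 : Complex.exp (-((x - α) / 2 : ℂ) * Complex.I)
        = Complex.exp ((α / 2) * Complex.I) / Complex.exp ((x / 2) * Complex.I) := by
      rw [← Complex.exp_sub]; congr 1; ring
    have e3 : Complex.exp (((x - α) / 2 : ℂ) * Complex.I)
        = Complex.exp ((x / 2) * Complex.I) / Complex.exp ((α / 2) * Complex.I) := by
      rw [← Complex.exp_sub]; congr 1; ring
    have e4 : ∀ y : ℂ, Complex.exp (y * Complex.I) = Complex.exp ((y / 2) * Complex.I) ^ 2 := by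
      intro y; rw [← Complex.exp_nat_mul]; congr 1; push_cast; ring
    rw [e2, e3, e4 x, e4 α]
    have n1 := Complex.exp_ne_zero ((x / 2 : ℂ) * Complex.I)
    have n2 := Complex.exp_ne_zero ((α / 2 : ℂ) * Complex.I)
    generalize Complex.exp ((x / 2 : ℂ) * Complex.I) = A at *
    generalize Complex.exp ((α / 2 : ℂ) * Complex.I) = B at *
    field_simp
    rw [Complex.I_sq]; ring
  · refine ⟨0, by norm_num, ?_⟩
    have w0 : w ≠ 0 := by rintro rfl; simp at hw; linarith
    have h2 := phaseDec_one_sub (fun x => w⁻¹ * Complex.exp ((x * Complex.I))) (by fun_prop)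
      (by simp) (fun x => by simpa [hn] using inv_lt_one_of_one_lt₀ hw)
    have h3 := (phaseDec_const (-w)).mul h2
    convert h3 using 2 with x
    field_simp
    ring

lemma phaseDec_prod (m : Multiset ℂ) :
    ∃ N ≤ 2 * m.card, PhaseDec
      (fun x => (m.map (fun w => Complex.exp (x * Complex.I) - w)).prod) N := by
  induction m using Multiset.induction_on with
  | empty => exact ⟨0, by simp, by simpa using phaseDec_const 1⟩
  | cons w m ih =>
    obtain ⟨N, hN, h⟩ := ih
    obtain ⟨M, hM, h'⟩ := phaseDec_factor w
    refine ⟨M + N, by simp; omega, ?_⟩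
    simpa using h'.mul h

lemma phaseDec_poly (P : Polynomial ℂ) :
    ∃ N ≤ 2 * P.natDegree, PhaseDec (fun x => P.eval (Complex.exp (x * Complex.I))) N := by
  obtain ⟨N, hN, h⟩ := phaseDec_prod P.roots
  have hs := IsAlgClosed.splits P
  refine ⟨0 + N, by have := P.card_roots'; omega, ?_⟩
  have h2 := (phaseDec_const P.leadingCoeff).mul h
  convert h2 using 2 with x
  conv_lhs => rw [hs.eq_prod_roots]
  simp [Polynomial.eval_mul, Polynomial.eval_multiset_prod]

lemma exists_zeros (g : ℝ → ℝ) (hg : Continuous g) (N : ℕ)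
    (h : g (2 * π) = g 0 + N * π) :
    ∃ z : Fin N → ℝ, Function.Injective z ∧
      ∀ j, z j ∈ Set.Ico (0 : ℝ) (2 * π) ∧ cos (g (z j)) = 0 := by
  have hpi := Real.pi_pos
  have key : ∀ j : Fin N, ∃ x ∈ Set.Ico (0 : ℝ) (2 * π),
      g x = (2 * ((⌈g 0 / π - 1 / 2⌉ + (j : ℕ) : ℤ) : ℝ) + 1) * π / 2 := by
    intro j
    have h1 := Int.le_ceil (g 0 / π - 1 / 2)
    have h2 := Int.ceil_lt_add_one (g 0 / π - 1 / 2)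
    have h4 : ((j : ℕ) : ℝ) + 1 ≤ N := by exact_mod_cast j.2
    have h5 : (0 : ℝ) ≤ ((j : ℕ) : ℝ) := by positivity
    have h3 : g 0 = (g 0 / π) * π := by field_simp
    push_cast
    generalize (⌈g 0 / π - 1 / 2⌉ : ℝ) = c at *
    generalize g 0 / π = q at *
    have := intermediate_value_Ico (by positivity : (0 : ℝ) ≤ 2 * π) hg.continuousOn
    have hmem : (2 * (c + ((j : ℕ) : ℝ)) + 1) * π / 2 ∈ Set.Ico (g 0) (g (2 * π)) := by
      rw [h, h3]
      constructor <;> nlinarith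
    obtain ⟨x, hx, hx2⟩ := this hmem
    exact ⟨x, hx, hx2⟩
  choose z hz1 hz2 using key
  refine ⟨z, fun i j hij => ?_, fun j => ⟨hz1 j, ?_⟩⟩
  · have h1 := hz2 i
    rw [hij, hz2 j] at h1
    have h2 := mul_right_cancel₀ hpi.ne' (div_left_inj' (two_ne_zero) |>.1 h1)
    push_cast at h2
    have : ((i : ℕ) : ℝ) = ((j : ℕ) : ℝ) := by linarith
    exact Fin.ext (by exact_mod_cast this)
  · rw [Real.cos_eq_zero_iff]
    exact ⟨_, hz2 j⟩

lemma cos_poly_ne_zero (K : ℕ) (a : Fin (K + 1) → ℝ) (ha : a ≠ 0) :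
    (fun x : ℝ => ∑ k : Fin (K + 1), a k * Real.cos ((k : ℕ) * x)) ≠ 0 := by
  intro h
  apply ha
  have hp : (∑ k : Fin (K + 1), a k • Polynomial.Chebyshev.T ℝ ((k : ℕ) : ℤ)) = 0 := by
    apply Polynomial.eq_zero_of_infinite_isRoot
    refine (Set.Icc_infinite (show (-1 : ℝ) < 1 by norm_num)).mono ?_
    intro y hy
    have := congrFun h (arccos y)
    simp only [Set.mem_ofPred_eq, Polynomial.IsRoot, Polynomial.eval_finsetSum,
      Polynomial.eval_smul, smul_eq_mul]
    rw [← Real.cos_arccos hy.1 hy.2]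
    simp only [Polynomial.Chebyshev.T_real_cos]
    simpa using this
  have hli := (Polynomial.Chebyshev.chebyshevTsequence ℝ).linearIndependent
  have hli2 := hli.comp (fun k : Fin (K + 1) => (k : ℕ)) Fin.val_injective
  rw [Fintype.linearIndependent_iff] at hli2
  exact funext (hli2 a hp)

lemma zeroMult_pos (f : ℝ → ℝ) (hf : AnalyticOnNhd ℝ f Set.univ) (h0 : f ≠ 0) (x : ℝ)
    (hx : f x = 0) : 1 ≤ zeroMult f x := by
  unfold zeroMult
  by_cases hne : {n : ℕ | 1 ≤ n ∧ iteratedDeriv n f x ≠ 0}.Nonempty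
  · exact (Nat.sInf_mem hne).1
  · exfalso
    rw [Set.not_nonempty_iff_eq_empty] at hne
    have hz : ∀ n, iteratedDeriv n f x = 0 := by
      intro n
      rcases Nat.eq_zero_or_pos n with rfl | hn
      · simpa using hx
      · by_contra hc
        have : n ∈ {n : ℕ | 1 ≤ n ∧ iteratedDeriv n f x ≠ 0} := ⟨hn, hc⟩
        rw [hne] at this; exact this
    apply h0
    have htop : analyticOrderAt f x = ⊤ := by
      rw [ENat.eq_top_iff_forall_ge]
      intro n
      exact (natCast_le_analyticOrderAt_iff_iteratedDeriv_eq_zero (hf x trivial)).2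
        fun i _ => hz i
    rw [analyticOrderAt_eq_top] at htop
    exact hf.eq_of_eventuallyEq (g := 0) (fun _ _ => analyticAt_const) htop

lemma Zcount_ge (f : ℝ → ℝ) (hf : AnalyticOnNhd ℝ f Set.univ) (h0 : f ≠ 0) (N : ℕ)
    (z : Fin N → ℝ) (hz : Function.Injective z)
    (h : ∀ j, z j ∈ Set.Ico (0 : ℝ) (2 * π) ∧ f (z j) = 0) : (N : ℝ≥0∞) ≤ Zcount f := by
  unfold Zcount
  let e : Fin N → {x : ℝ // x ∈ Set.Ico (0 : ℝ) (2 * Real.pi) ∧ f x = 0} :=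
    fun j => ⟨z j, h j⟩
  have he : Function.Injective e := fun i j hij => hz (congrArg Subtype.val hij)
  refine le_trans ?_ (ENNReal.sum_le_tsum (Finset.univ.map ⟨e, he⟩))
  rw [Finset.sum_map]
  calc (N : ℝ≥0∞) = ∑ _j : Fin N, 1 := by simp
    _ ≤ _ := Finset.sum_le_sum fun j _ => by
      exact_mod_cast zeroMult_pos f hf h0 (z j) (h j).2

lemma cos_poly_analytic (K : ℕ) (a : Fin (K + 1) → ℝ) :
    AnalyticOnNhd ℝ (fun x : ℝ => ∑ k : Fin (K + 1), a k * Real.cos ((k : ℕ) * x)) Set.univ := by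
  intro x _
  refine Finset.analyticAt_fun_sum _ fun k _ => ?_
  exact analyticAt_const.mul
    ((Real.analyticAt_cos).comp (analyticAt_const.mul analyticAt_id))

theorem palindromic_cosine_zero_count (K : ℕ) (hK : 1 ≤ K)
    (a : Fin (K + 1) → ℝ) (ha : a ≠ 0) :
    (2 * K : ℝ≥0∞) ≤
      Zcount (fun x => ∑ k : Fin (K + 1), a k * Real.cos ((k : ℕ) * x)) +
      Zcount (fun x => ∑ k : Fin (K + 1), a (Fin.rev k) * Real.cos ((k : ℕ) * x)) := by
  let P : Polynomial ℂ := ∑ k : Fin (K + 1), Polynomial.C (a k : ℂ) * Polynomial.X ^ (k : ℕ)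
  have hdeg : P.natDegree ≤ K := Polynomial.natDegree_sum_le_of_forall_le _ _ fun k _ =>
    (Polynomial.natDegree_C_mul_X_pow_le _ _).trans (by omega)
  obtain ⟨N, hN, s, φ, hφ, hinc, hP⟩ := phaseDec_poly P
  have hev : ∀ x : ℝ, ∑ k : Fin (K + 1), (a k : ℂ) * Complex.exp (((k : ℕ) * x : ℝ) * Complex.I)
      = (s x : ℂ) * Complex.exp (φ x * Complex.I) := by
    intro x
    rw [← hP]
    simp only [P, Polynomial.eval_finsetSum, Polynomial.eval_mul, Polynomial.eval_C,
      Polynomial.eval_pow, Polynomial.eval_X, ← Complex.exp_nat_mul]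
    refine Finset.sum_congr rfl fun k _ => ?_
    push_cast; ring_nf
  have hc : ∀ x : ℝ, ∑ k : Fin (K + 1), a k * cos ((k : ℕ) * x) = s x * cos (φ x) := by
    intro x
    have := congrArg Complex.re (hev x)
    simpa only [Complex.re_sum, Complex.re_ofReal_mul, Complex.exp_ofReal_mul_I_re] using this
  have hs : ∀ x : ℝ, ∑ k : Fin (K + 1), a k * sin ((k : ℕ) * x) = s x * sin (φ x) := by
    intro x
    have := congrArg Complex.im (hev x)
    simpa only [Complex.im_sum, Complex.im_ofReal_mul, Complex.exp_ofReal_mul_I_im] using this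
  have hr : ∀ x : ℝ, ∑ k : Fin (K + 1), a (Fin.rev k) * cos ((k : ℕ) * x)
      = s x * cos (K * x - φ x) := by
    intro x
    rw [← Equiv.sum_comp Fin.revPerm]
    rw [Real.cos_sub, mul_add, mul_left_comm, ← hc, mul_left_comm, ← hs, Finset.mul_sum,
      Finset.mul_sum, ← Finset.sum_add_distrib]
    refine Finset.sum_congr rfl fun k _ => ?_
    have hk : (((Fin.rev k : Fin (K + 1)) : ℕ) : ℝ) = (K : ℝ) - (k : ℕ) := by
      rw [Fin.val_rev, Nat.cast_sub (by omega)]; push_cast; ring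
    simp only [Fin.revPerm_apply, Fin.rev_rev, hk]
    rw [sub_mul, Real.cos_sub]; ring
  obtain ⟨z, z1, z2⟩ := exists_zeros φ hφ N hinc
  have hN2 : N ≤ 2 * K := by omega
  obtain ⟨y, y1, y2⟩ := exists_zeros (fun x => K * x - φ x) (by fun_prop) (2 * K - N) (by
    rw [Nat.cast_sub hN2]; push_cast; rw [hinc]; ring)
  have ha' : (fun k => a (Fin.rev k)) ≠ 0 := by
    intro h
    apply ha
    funext k
    simpa using congrFun h (Fin.rev k)
  have A := Zcount_ge _ (cos_poly_analytic K a) (cos_poly_ne_zero K a ha) N z z1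
    (fun j => ⟨(z2 j).1, by rw [hc, (z2 j).2, mul_zero]⟩)
  have B := Zcount_ge _ (cos_poly_analytic K _) (cos_poly_ne_zero K _ ha') (2 * K - N) y y1
    (fun j => ⟨(y2 j).1, by rw [hr, (y2 j).2, mul_zero]⟩)
  refine le_trans ?_ (add_le_add A B)
  have : 2 * K = N + (2 * K - N) := by omega
  exact_mod_cast this.le
end

section
/- Let K ≥ 1 and let a_0, ..., a_K be real random variables (on some probability space) that are independent and whose joint distribution is palindromic, i.e., the random vector (a_0, ..., a_K) has the same distribution as the reversed vector (a_K, ..., a_0). Let C_a(x) = ∑_{k=0}^{K} a_k cos(kx), and suppose the event E = {(a_0,...,a_K) ≠ 0} has positive probability. Then the conditional expectation of Z(C_a) given E is at least K; equivalently, E[Z(C_a)·1_E] ≥ K · P(E). -/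
open Real Set
open scoped ENNReal

open MeasureTheory ProbabilityTheory

theorem aux_cos_zeros_up (φ : ℝ → ℝ) (hφ : Continuous φ) (M : ℕ)
    (h : φ (2 * π) = φ 0 + π * M) :
    ∃ g : Fin M → ℝ, Function.Injective g ∧
      ∀ j, g j ∈ Set.Ico (0 : ℝ) (2 * π) ∧ Real.cos (φ (g j)) = 0 := by
  have hpi := Real.pi_pos
  set k0 : ℤ := ⌈(φ 0 - π / 2) / π⌉ with hk0
  have h1 : (φ 0 - π / 2) ≤ k0 * π := by
    rw [← div_le_iff₀ hpi]; exact Int.le_ceil _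
  have h2 : k0 * π < φ 0 - π / 2 + π := by
    have := Int.ceil_lt_add_one ((φ 0 - π / 2) / π)
    rw [← hk0] at this
    have h3 := mul_lt_mul_of_pos_right this hpi
    rwa [add_mul, div_mul_cancel₀ _ hpi.ne', one_mul] at h3
  have key : ∀ j : Fin M, ∃ x ∈ Set.Ico (0 : ℝ) (2 * π), φ x = π / 2 + (k0 + (j : ℕ)) * π := by
    intro j
    have hj : ((j : ℕ) : ℝ) + 1 ≤ M := by exact_mod_cast j.2
    have hj0 : (0 : ℝ) ≤ ((j : ℕ) : ℝ) := by positivity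
    have := intermediate_value_Ico (f := φ) (a := 0) (b := 2 * π) (by positivity)
      hφ.continuousOn
    have hm : π / 2 + (k0 + (j : ℕ)) * π ∈ Set.Ico (φ 0) (φ (2 * π)) := by
      rw [h]
      constructor
      · nlinarith
      · nlinarith
    obtain ⟨x, hx, hx'⟩ := this hm
    exact ⟨x, hx, hx'⟩
  choose g hg hg' using key
  refine ⟨g, ?_, fun j => ⟨hg j, ?_⟩⟩
  · intro i j hij
    have h3 := hg' i
    rw [hij, hg' j] at h3
    have h4 : ((j : ℕ) : ℝ) = (i : ℕ) := by
      have := mul_right_cancel₀ hpi.ne' (add_left_cancel h3)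
      linarith
    exact (Fin.ext (by exact_mod_cast h4)).symm
  · rw [hg', Real.cos_eq_zero_iff]
    refine ⟨k0 + (j : ℕ), ?_⟩
    push_cast; ring

theorem aux_cos_zeros (φ : ℝ → ℝ) (hφ : Continuous φ) (M : ℕ)
    (h : φ (2 * π) = φ 0 + π * M ∨ φ (2 * π) = φ 0 - π * M) :
    ∃ g : Fin M → ℝ, Function.Injective g ∧
      ∀ j, g j ∈ Set.Ico (0 : ℝ) (2 * π) ∧ Real.cos (φ (g j)) = 0 := by
  rcases h with h | h
  · exact aux_cos_zeros_up φ hφ M h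
  · obtain ⟨g, h1, h2⟩ := aux_cos_zeros_up (fun x => - φ x) hφ.neg M (by simp only [h]; ring)
    exact ⟨g, h1, fun j => ⟨(h2 j).1, by simpa using (h2 j).2⟩⟩

theorem aux_cos_indep (K : ℕ) (a : Fin (K + 1) → ℝ)
    (h : ∀ x : ℝ, ∑ k, a k * Real.cos ((k : ℕ) * x) = 0) (k : Fin (K + 1)) : a k = 0 := by
  let S : Polynomial.Sequence ℝ :=
    ⟨fun n => Polynomial.Chebyshev.T ℝ (n : ℤ), fun n => by simp⟩
  have hli : LinearIndependent ℝ (fun n : ℕ => Polynomial.Chebyshev.T ℝ (n : ℤ)) :=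
    S.linearIndependent
  have hli2 : LinearIndependent ℝ
      (fun n : Fin (K + 1) => Polynomial.Chebyshev.T ℝ ((n : ℕ) : ℤ)) :=
    hli.comp (fun n : Fin (K + 1) => (n : ℕ)) Fin.val_injective
  rw [Fintype.linearIndependent_iff] at hli2
  apply hli2 a
  apply Polynomial.eq_zero_of_infinite_isRoot
  apply (Set.Icc_infinite (show (-1 : ℝ) < 1 by norm_num)).mono
  intro y hy
  have hc : Real.cos (Real.arccos y) = y := Real.cos_arccos hy.1 hy.2
  have := h (Real.arccos y)
  simp only [Set.mem_ofPred_eq, Polynomial.IsRoot.def]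
  rw [← hc, Polynomial.eval_finsetSum, ← this]
  refine Finset.sum_congr rfl fun i _ => ?_
  rw [Polynomial.eval_smul, Polynomial.Chebyshev.T_real_cos]
  simp

theorem aux_mult (f : ℝ → ℝ) (hf : ∀ x, AnalyticAt ℝ f x) (hne : ∃ x, f x ≠ 0) (x : ℝ)
    (hx : f x = 0) : 1 ≤ zeroMult f x := by
  unfold zeroMult
  have hs : {n : ℕ | 1 ≤ n ∧ iteratedDeriv n f x ≠ 0}.Nonempty := by
    by_contra hcon
    rw [Set.not_nonempty_iff_eq_empty] at hcon
    have hall : ∀ n, iteratedDeriv n f x = 0 := by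
      intro n
      rcases Nat.eq_zero_or_pos n with rfl | hn
      · simpa using hx
      · by_contra h0
        have : n ∈ {n : ℕ | 1 ≤ n ∧ iteratedDeriv n f x ≠ 0} := ⟨hn, h0⟩
        rw [hcon] at this
        exact this
    have htop : analyticOrderAt f x = ⊤ := by
      rw [ENat.eq_top_iff_forall_ge]
      intro n
      exact (natCast_le_analyticOrderAt_iff_iteratedDeriv_eq_zero (hf x)).2 fun i _ => hall i
    rw [analyticOrderAt_eq_top] at htop
    have hon : AnalyticOnNhd ℝ f Set.univ := fun y _ => hf y
    have := hon.eqOn_zero_of_preconnected_of_eventuallyEq_zero isPreconnected_univ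
      (Set.mem_univ x) htop
    obtain ⟨y, hy⟩ := hne
    exact hy (this (Set.mem_univ y))
  exact (Nat.sInf_mem hs).1

theorem aux_Zcount (f : ℝ → ℝ) (hf : ∀ x, AnalyticAt ℝ f x) (hne : ∃ x, f x ≠ 0) (M : ℕ)
    (g : Fin M → ℝ) (hg : Function.Injective g)
    (h : ∀ j, g j ∈ Set.Ico (0 : ℝ) (2 * π) ∧ f (g j) = 0) : (M : ℝ≥0∞) ≤ Zcount f := by
  unfold Zcount
  let G : Fin M → {x : ℝ // x ∈ Set.Ico (0 : ℝ) (2 * Real.pi) ∧ f x = 0} := fun j => ⟨g j, h j⟩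
  have hG : Function.Injective G := fun i j hij => hg (congrArg Subtype.val hij)
  refine le_trans ?_ (ENNReal.tsum_comp_le_tsum_of_injective hG _)
  rw [tsum_fintype]
  calc (M : ℝ≥0∞) = ∑ j : Fin M, (1 : ℝ≥0∞) := by simp
    _ ≤ _ := Finset.sum_le_sum fun j _ => by
      have := aux_mult f hf hne (g j) (h j).2
      exact_mod_cast this

/-- weight of a root -/
noncomputable def rootW (z : ℂ) : ℕ := if ‖z‖ < 1 then 2 else if ‖z‖ = 1 then 1 else 0

theorem aux_phase1 (w : ℝ → ℂ) (hw : Continuous w) (h : ∀ x, ‖w x‖ < 1) :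
    Continuous (fun x => (1 - w x).arg) := by
  rw [continuous_iff_continuousAt]
  intro x
  refine ContinuousAt.comp (g := Complex.arg) (f := fun x => 1 - w x)
    (Complex.continuousAt_arg ?_) (by fun_prop)
  rw [Complex.mem_slitPlane_iff]
  left
  have := (Complex.abs_re_le_norm (w x)).trans_lt (h x)
  have := (abs_lt.1 this).2
  simpa using this

theorem aux_phase (z : ℂ) : ∃ (R φ : ℝ → ℝ), Continuous φ ∧ φ (2 * π) = φ 0 + π * rootW z ∧
    ∀ x : ℝ, Complex.exp (x * Complex.I) - z = R x * Complex.exp (φ x * Complex.I) := by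
  have he : Complex.exp (2 * π * Complex.I) = 1 := Complex.exp_two_pi_mul_I
  have he' : Complex.exp (-(2 * π * Complex.I)) = 1 := by rw [Complex.exp_neg, he, inv_one]
  rcases lt_trichotomy ‖z‖ 1 with h | h | h
  · refine ⟨fun x => ‖1 - z * Complex.exp (-(x * Complex.I))‖,
      fun x => x + (1 - z * Complex.exp (-(x * Complex.I))).arg, ?_, ?_, ?_⟩
    · refine continuous_id.add (aux_phase1 _ (by fun_prop) fun x => ?_)
      rw [norm_mul, ← neg_mul, ← Complex.ofReal_neg, Complex.norm_exp_ofReal_mul_I]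
      simpa using h
    · simp [rootW, h, he']; ring
    · intro x
      rw [Complex.ofReal_add, add_mul, Complex.exp_add, mul_left_comm,
        Complex.norm_mul_exp_arg_mul_I, mul_sub, mul_left_comm, ← Complex.exp_add]
      simp
  · refine ⟨fun x => 2 * Real.sin ((x - z.arg) / 2), fun x => (x + z.arg) / 2 + π / 2,
      by fun_prop, ?_, ?_⟩
    · simp [rootW, h]; ring
    · intro x
      have hz : z = Complex.exp (z.arg * Complex.I) := by
        conv_lhs => rw [← Complex.norm_mul_exp_arg_mul_I z, h]
        simp
      set t := z.arg
      rw [hz]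
      push_cast
      rw [Complex.sin, add_mul, Complex.exp_add ((x + t) / 2 * Complex.I),
        Complex.exp_pi_div_two_mul_I]
      have h1 : Complex.exp (x * Complex.I) = Complex.exp ((x - t) / 2 * Complex.I)
          * Complex.exp ((x + t) / 2 * Complex.I) := by
        rw [← Complex.exp_add]; congr 1; ring
      have h2 : Complex.exp (t * Complex.I) = Complex.exp (-((x - t) / 2) * Complex.I)
          * Complex.exp ((x + t) / 2 * Complex.I) := by
        rw [← Complex.exp_add]; congr 1; ring
      rw [h1, h2]
      linear_combination (-(Complex.exp ((x - t) / 2 * Complex.I)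
          * Complex.exp ((x + t) / 2 * Complex.I)) + Complex.exp (-((x - t) / 2) * Complex.I)
          * Complex.exp ((x + t) / 2 * Complex.I)) * (- Complex.I_sq)
  · have hz : z ≠ 0 := by rintro rfl; simp at h; linarith
    refine ⟨fun x => ‖z‖ * ‖1 - z⁻¹ * Complex.exp (x * Complex.I)‖,
      fun x => (-z).arg + (1 - z⁻¹ * Complex.exp (x * Complex.I)).arg, ?_, ?_, ?_⟩
    · refine continuous_const.add (aux_phase1 _ (by fun_prop) fun x => ?_)
      rw [norm_mul, Complex.norm_exp_ofReal_mul_I, norm_inv, mul_one]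
      exact inv_lt_one_of_one_lt₀ h
    · simp [rootW, h.not_gt, h.ne', he]
    · intro x
      have h1 := Complex.norm_mul_exp_arg_mul_I (-z)
      have h2 := Complex.norm_mul_exp_arg_mul_I (1 - z⁻¹ * Complex.exp (x * Complex.I))
      rw [norm_neg] at h1
      push_cast
      rw [add_mul, Complex.exp_add, mul_mul_mul_comm, h1, h2, mul_sub, neg_mul z, neg_mul z,
        mul_inv_cancel_left₀ hz]
      ring

theorem aux_phase_prod (s : Multiset ℂ) : ∃ (R φ : ℝ → ℝ), Continuous φ ∧
    φ (2 * π) = φ 0 + π * ((s.map rootW).sum : ℕ) ∧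
    ∀ x : ℝ, (s.map (fun z => Complex.exp (x * Complex.I) - z)).prod
      = R x * Complex.exp (φ x * Complex.I) := by
  induction s using Multiset.induction_on with
  | empty => exact ⟨fun _ => 1, fun _ => 0, by fun_prop, by simp, by simp⟩
  | cons z s ih =>
    obtain ⟨R, φ, h1, h2, h3⟩ := ih
    obtain ⟨R', φ', h1', h2', h3'⟩ := aux_phase z
    refine ⟨fun x => R' x * R x, fun x => φ' x + φ x, by fun_prop, ?_, fun x => ?_⟩
    · simp only [h2, h2', Multiset.map_cons, Multiset.sum_cons, Nat.cast_add]; ring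
    · simp only [Multiset.map_cons, Multiset.prod_cons, h3, h3']
      push_cast
      rw [add_mul, Complex.exp_add]; ring

theorem aux_phase_poly (p : Polynomial ℂ) : ∃ (R φ : ℝ → ℝ), Continuous φ ∧
    φ (2 * π) = φ 0 + π * ((p.roots.map rootW).sum : ℕ) ∧
    ∀ x : ℝ, p.eval (Complex.exp (x * Complex.I))
      = R x * Complex.exp (φ x * Complex.I) := by
  obtain ⟨R, φ, h1, h2, h3⟩ := aux_phase_prod p.roots
  refine ⟨fun x => ‖p.leadingCoeff‖ * R x, fun x => p.leadingCoeff.arg + φ x, by fun_prop, ?_,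
    fun x => ?_⟩
  · simp only [h2]; ring
  · have hs := (IsAlgClosed.splits p).eq_prod_roots
    conv_lhs => rw [hs]
    rw [Polynomial.eval_mul, Polynomial.eval_C, Polynomial.eval_multiset_prod, Multiset.map_map]
    simp only [Function.comp_def, Polynomial.eval_sub, Polynomial.eval_X, Polynomial.eval_C]
    rw [h3]
    conv_lhs => rw [← Complex.norm_mul_exp_arg_mul_I p.leadingCoeff]
    push_cast
    rw [add_mul, Complex.exp_add]; ring

/-- the polynomial with the given coefficients -/
noncomputable def cpoly {K : ℕ} (a : Fin (K + 1) → ℝ) : Polynomial ℂ :=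
  ∑ k : Fin (K + 1), Polynomial.C (a k : ℂ) * Polynomial.X ^ (k : ℕ)

/-- weighted number of roots -/
noncomputable def rootN {K : ℕ} (a : Fin (K + 1) → ℝ) : ℕ := ((cpoly a).roots.map rootW).sum

theorem aux_eval {K : ℕ} (a : Fin (K + 1) → ℝ) (z : ℂ) :
    (cpoly a).eval z = ∑ k : Fin (K + 1), (a k : ℂ) * z ^ (k : ℕ) := by
  simp [cpoly, Polynomial.eval_finsetSum]

theorem aux_log_comp (p : Polynomial ℂ) (r : ℝ) (hr : 0 < r) :
    (p.comp (Polynomial.C (r : ℂ) * Polynomial.X)).logMahlerMeasure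
      = Real.log ‖p.leadingCoeff‖ + (p.roots.map (fun z => Real.log (max r ‖z‖))).sum := by
  by_cases hp : p = 0
  · simp [hp]
  have hr' : (r : ℂ) ≠ 0 := by exact_mod_cast hr.ne'
  rw [Polynomial.logMahlerMeasure_eq_log_MahlerMeasure]
  have hs := (IsAlgClosed.splits p).eq_prod_roots
  have h1 : (p.comp (Polynomial.C (r : ℂ) * Polynomial.X)).mahlerMeasure
      = ‖p.leadingCoeff‖ * (p.roots.map (fun z => max r ‖z‖)).prod := by
    conv_lhs => rw [hs]
    rw [Polynomial.mul_comp, Polynomial.C_comp, Polynomial.mahlerMeasure_mul,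
      Polynomial.mahlerMeasure_const, Polynomial.multiset_prod_comp,
      Polynomial.prod_mahlerMeasure_eq_mahlerMeasure_prod, Multiset.map_map, Multiset.map_map]
    congr 2
    refine Multiset.map_congr rfl fun z _ => ?_
    simp only [Function.comp_def, Polynomial.sub_comp, Polynomial.X_comp, Polynomial.C_comp]
    have := Polynomial.mahlerMeasure_C_mul_X_add_C hr' (-z)
    rw [Polynomial.C_neg, ← sub_eq_add_neg] at this
    rw [this]
    simp [abs_of_pos hr]
  have hne : ∀ x ∈ p.roots.map (fun z => max r ‖z‖), x ≠ 0 := by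
    intro x hx
    obtain ⟨z, _, rfl⟩ := Multiset.mem_map.1 hx
    exact (lt_max_of_lt_left hr).ne'
  rw [h1, Real.log_mul (by simpa using hp) (Multiset.prod_ne_zero fun h => hne 0 h rfl),
    Real.log_multiset_prod hne, Multiset.map_map]
  rfl

theorem aux_tendsto_one (z : ℂ) : Filter.Tendsto (fun n : ℕ => ((n : ℝ) + 1) *
    (Real.log (max (Real.exp (1 / ((n : ℝ) + 1))) ‖z‖)
      - Real.log (max (Real.exp (-(1 / ((n : ℝ) + 1)))) ‖z‖))) Filter.atTop
    (nhds (rootW z : ℝ)) := by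
  have h0 : Filter.Tendsto (fun n : ℕ => 1 / ((n : ℝ) + 1)) Filter.atTop (nhds 0) :=
    tendsto_one_div_add_atTop_nhds_zero_nat
  have hp : Filter.Tendsto (fun n : ℕ => Real.exp (1 / ((n : ℝ) + 1))) Filter.atTop (nhds 1) := by
    simpa using h0.rexp
  have hm : Filter.Tendsto (fun n : ℕ => Real.exp (-(1 / ((n : ℝ) + 1)))) Filter.atTop
      (nhds 1) := by
    simpa using h0.neg.rexp
  have hn1 : ∀ n : ℕ, (1 : ℝ) < Real.exp (1 / ((n : ℝ) + 1)) := fun n => by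
    rw [Real.one_lt_exp_iff]; positivity
  have hn2 : ∀ n : ℕ, Real.exp (-(1 / ((n : ℝ) + 1))) < 1 := fun n => by
    rw [Real.exp_lt_one_iff, neg_lt_zero]; positivity
  refine Filter.Tendsto.congr' (f₁ := fun _ => (rootW z : ℝ)) ?_ tendsto_const_nhds
  rcases lt_trichotomy ‖z‖ 1 with h | h | h
  · filter_upwards [hm.eventually (lt_mem_nhds h)] with n hn
    have := hn1 n
    rw [max_eq_left hn.le, max_eq_left (by linarith), Real.log_exp, Real.log_exp]
    have : (n : ℝ) + 1 ≠ 0 := by positivity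
    simp [rootW, h]
    field_simp
    norm_num
  · refine Filter.Eventually.of_forall fun n => ?_
    have := hn1 n
    have := hn2 n
    simp only [h]
    rw [max_eq_left (by linarith), max_eq_right (by linarith), Real.log_exp, Real.log_one]
    have : (n : ℝ) + 1 ≠ 0 := by positivity
    simp [rootW, h]
    field_simp
  · filter_upwards [hp.eventually (gt_mem_nhds h)] with n hn
    have := hn2 n
    rw [max_eq_right hn.le, max_eq_right (by linarith)]
    simp [rootW, h.not_gt, h.ne']

theorem aux_meas_log (K : ℕ) (r : ℝ) : Measurable (fun a : Fin (K + 1) → ℝ =>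
    ((cpoly a).comp (Polynomial.C (r : ℂ) * Polynomial.X)).logMahlerMeasure) := by
  simp only [Polynomial.logMahlerMeasure_def, Real.circleAverage, Polynomial.eval_comp, aux_eval,
    intervalIntegral.integral_of_le Real.two_pi_pos.le]
  simp only [smul_eq_mul]
  refine Measurable.const_mul ?_ _
  refine (StronglyMeasurable.integral_prod_right
    (f := fun (a : Fin (K + 1) → ℝ) (t : ℝ) => Real.log ‖∑ k : Fin (K + 1), (a k : ℂ) *
      (Polynomial.eval (circleMap 0 1 t) (Polynomial.C (r : ℂ) * Polynomial.X)) ^ (k : ℕ)‖)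
    ?_).measurable
  refine Measurable.stronglyMeasurable ?_
  refine Real.measurable_log.comp ?_
  refine Continuous.measurable ?_
  simp only [Polynomial.eval_mul, Polynomial.eval_C, Polynomial.eval_X]
  have : Continuous (fun x : (Fin (K + 1) → ℝ) × ℝ => circleMap 0 1 x.2) :=
    (continuous_circleMap 0 1).comp continuous_snd
  fun_prop

theorem aux_meas_rootN (K : ℕ) : Measurable (fun a : Fin (K + 1) → ℝ => rootN a) := by
  have h : Measurable (fun a : Fin (K + 1) → ℝ => (rootN a : ℝ)) := by
    refine measurable_of_tendsto_metrizable (f := fun (n : ℕ) (a : Fin (K + 1) → ℝ) =>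
      ((n : ℝ) + 1) *
      (((cpoly a).comp (Polynomial.C ((Real.exp (1 / ((n : ℝ) + 1)) : ℝ) : ℂ) * Polynomial.X)).logMahlerMeasure
      - ((cpoly a).comp (Polynomial.C ((Real.exp (-(1 / ((n : ℝ) + 1))) : ℝ) : ℂ) * Polynomial.X)).logMahlerMeasure))
      (fun n => ((aux_meas_log K _).sub (aux_meas_log K _)).const_mul _) ?_
    rw [tendsto_pi_nhds]
    intro a
    simp only [aux_log_comp _ _ (Real.exp_pos _), add_sub_add_left_eq_sub, ← Multiset.sum_map_sub,
      ← Multiset.sum_map_mul_left]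
    have := tendsto_multiset_sum (f := fun (z : ℂ) (n : ℕ) => ((n : ℝ) + 1) *
      (Real.log (max (Real.exp (1 / ((n : ℝ) + 1))) ‖z‖)
      - Real.log (max (Real.exp (-(1 / ((n : ℝ) + 1)))) ‖z‖))) (a := fun z => (rootW z : ℝ))
      (x := Filter.atTop) (cpoly a).roots (fun z _ => aux_tendsto_one z)
    convert this using 2
    simp [rootN, Multiset.map_map, Function.comp_def]
  have h2 : (fun a : Fin (K + 1) → ℝ => rootN a) = fun a => ⌊(rootN a : ℝ)⌋₊ := by
    ext a; simp
  rw [h2]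
  exact Nat.measurable_floor.comp h

theorem aux_analytic {K : ℕ} (a : Fin (K + 1) → ℝ) (x : ℝ) :
    AnalyticAt ℝ (fun x => ∑ k : Fin (K + 1), a k * Real.cos ((k : ℕ) * x)) x := by
  apply Finset.analyticAt_fun_sum
  intro k _
  exact analyticAt_const.mul (Real.analyticAt_cos.comp' (analyticAt_const.mul analyticAt_id))

theorem aux_ne {K : ℕ} (a : Fin (K + 1) → ℝ) (ha : ∃ k, a k ≠ 0) :
    ∃ x, (fun x => ∑ k : Fin (K + 1), a k * Real.cos ((k : ℕ) * x)) x ≠ 0 := by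
  by_contra! h
  obtain ⟨k, hk⟩ := ha
  exact hk (aux_cos_indep K a h k)

theorem aux_lower1 {K : ℕ} (a : Fin (K + 1) → ℝ) (ha : ∃ k, a k ≠ 0) :
    (rootN a : ℝ≥0∞) ≤ Zcount (fun x => ∑ k : Fin (K + 1), a k * Real.cos ((k : ℕ) * x)) := by
  obtain ⟨R, φ, h1, h2, h3⟩ := aux_phase_poly (cpoly a)
  obtain ⟨g, hg, hg'⟩ := aux_cos_zeros φ h1 _ (Or.inl h2)
  refine aux_Zcount _ (aux_analytic a) (aux_ne a ha) _ g hg fun j => ⟨(hg' j).1, ?_⟩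
  have h4 := congrArg Complex.re (h3 (g j))
  rw [Complex.re_ofReal_mul, Complex.exp_ofReal_mul_I_re, (hg' j).2, mul_zero, aux_eval,
    Complex.re_sum] at h4
  rw [← h4]
  refine Finset.sum_congr rfl fun k _ => ?_
  rw [Complex.re_ofReal_mul, ← Complex.exp_nat_mul, ← Complex.exp_ofReal_mul_I_re]
  push_cast
  rw [mul_assoc]

theorem aux_lower2 {K : ℕ} (a : Fin (K + 1) → ℝ) (ha : ∃ k, a k ≠ 0) :
    ((2 * K - rootN (fun k => a (Fin.rev k)) : ℕ) : ℝ≥0∞) ≤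
      Zcount (fun x => ∑ k : Fin (K + 1), a k * Real.cos ((k : ℕ) * x)) := by
  obtain ⟨R, φ, h1, h2, h3⟩ := aux_phase_poly (cpoly (fun k => a (Fin.rev k)))
  rcases le_total (2 * K) (rootN (fun k => a (Fin.rev k))) with hle | hle
  · rw [Nat.sub_eq_zero_of_le hle]; simp
  obtain ⟨g, hg, hg'⟩ := aux_cos_zeros (fun x => φ x - K * x) (by fun_prop)
    (2 * K - rootN (fun k => a (Fin.rev k))) (Or.inr (by
      rw [Nat.cast_sub hle, h2, rootN]; push_cast; ring))
  refine aux_Zcount _ (aux_analytic a) (aux_ne a ha) _ g hg fun j => ⟨(hg' j).1, ?_⟩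
  set x := g j
  have h4 := congrArg (fun w => (Complex.exp (-(K * x * Complex.I)) * w).re) (h3 x)
  have h5 : Complex.exp (-(K * x * Complex.I)) * (R x * Complex.exp (φ x * Complex.I))
      = R x * Complex.exp ((φ x - K * x : ℝ) * Complex.I) := by
    rw [mul_left_comm, ← Complex.exp_add]; congr 2; push_cast; ring
  simp only [h5] at h4
  rw [Complex.re_ofReal_mul, Complex.exp_ofReal_mul_I_re, (hg' j).2, mul_zero, aux_eval,
    Finset.mul_sum, Complex.re_sum] at h4
  rw [← h4, ← Equiv.sum_comp Fin.revPerm]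
  refine Finset.sum_congr rfl fun k _ => ?_
  rw [mul_left_comm, Complex.re_ofReal_mul, ← Complex.exp_nat_mul, ← Complex.exp_add]
  have h6 : -((K : ℂ) * x * Complex.I) + (k : ℕ) * (x * Complex.I)
      = ((-(((K : ℝ) - (k : ℕ)) * x) : ℝ) : ℂ) * Complex.I := by
    push_cast; ring
  rw [h6, Complex.exp_ofReal_mul_I_re, Real.cos_neg]
  have hk : (k : ℕ) ≤ K := Nat.lt_succ_iff.1 k.2
  simp [Fin.val_rev, Nat.cast_sub hk]

theorem palindromic_random_cosine_expected_zeros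
    {Ω : Type*} [MeasurableSpace Ω] (μ : Measure Ω) [IsProbabilityMeasure μ]
    (K : ℕ) (hK : 1 ≤ K) (a : Fin (K + 1) → Ω → ℝ)
    (hmeas : ∀ k, Measurable (a k))
    (hindep : iIndepFun a μ)
    (hpal : Measure.map (fun ω (k : Fin (K + 1)) => a k ω) μ =
            Measure.map (fun ω (k : Fin (K + 1)) => a (Fin.rev k) ω) μ)
    (hE : 0 < μ {ω | ∃ k, a k ω ≠ 0}) :
    (K : ℝ≥0∞) * μ {ω | ∃ k, a k ω ≠ 0} ≤
      ∫⁻ ω in {ω | ∃ k, a k ω ≠ 0},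
        Zcount (fun x => ∑ k : Fin (K + 1), a k ω * Real.cos ((k : ℕ) * x)) ∂μ := by
  set S : Set (Fin (K + 1) → ℝ) := {b | ∃ k, b k ≠ 0} with hS
  have hSm : MeasurableSet S := by
    have : S = {0}ᶜ := by
      ext b; simp [hS, funext_iff]
    rw [this]; exact (measurableSet_singleton _).compl
  have hA : Measurable (fun ω (k : Fin (K + 1)) => a k ω) := measurable_pi_lambda _ hmeas
  have hA' : Measurable (fun ω (k : Fin (K + 1)) => a (Fin.rev k) ω) :=
    measurable_pi_lambda _ fun k => hmeas _
  set E : Set Ω := {ω | ∃ k, a k ω ≠ 0} with hEdef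
  have hEm : MeasurableSet E := hA hSm
  have hErev : E = (fun ω (k : Fin (K + 1)) => a (Fin.rev k) ω) ⁻¹' S := by
    ext ω
    simp only [hEdef, hS, Set.mem_preimage, Set.mem_ofPred_eq]
    constructor
    · rintro ⟨k, hk⟩; exact ⟨Fin.rev k, by simpa using hk⟩
    · rintro ⟨k, hk⟩; exact ⟨_, hk⟩
  have hNm := aux_meas_rootN K
  have hN2 : Measurable (fun b : Fin (K + 1) → ℝ => ((2 * K - rootN b : ℕ) : ℝ≥0∞)) :=
    (measurable_of_countable (fun n : ℕ => ((2 * K - n : ℕ) : ℝ≥0∞))).comp hNm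
  have hN1 : Measurable (fun b : Fin (K + 1) → ℝ => ((rootN b : ℕ) : ℝ≥0∞)) :=
    (measurable_of_countable (fun n : ℕ => (n : ℝ≥0∞))).comp hNm
  set I := ∫⁻ ω in E,
        Zcount (fun x => ∑ k : Fin (K + 1), a k ω * Real.cos ((k : ℕ) * x)) ∂μ with hI
  have I1 : ∫⁻ ω in E, (rootN (fun k => a k ω) : ℝ≥0∞) ∂μ ≤ I :=
    setLIntegral_mono' hEm fun ω hω => aux_lower1 (fun k => a k ω) hω
  have I2 : ∫⁻ ω in E, ((2 * K - rootN (fun k => a (Fin.rev k) ω) : ℕ) : ℝ≥0∞) ∂μ ≤ I :=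
    setLIntegral_mono' hEm fun ω hω => aux_lower2 (fun k => a k ω) hω
  have I3 : ∫⁻ ω in E, ((2 * K - rootN (fun k => a (Fin.rev k) ω) : ℕ) : ℝ≥0∞) ∂μ
      = ∫⁻ ω in E, ((2 * K - rootN (fun k => a k ω) : ℕ) : ℝ≥0∞) ∂μ := by
    have e1 := setLIntegral_map (μ := μ) hSm hN2 hA
    have e2 := setLIntegral_map (μ := μ) hSm hN2 hA'
    rw [← hErev, ← hpal, e1] at e2
    exact e2.symm
  have I4 : (K : ℝ≥0∞) * μ E + K * μ E ≤ I + I := by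
    calc (K : ℝ≥0∞) * μ E + K * μ E = ∫⁻ ω in E, ((2 * K : ℕ) : ℝ≥0∞) ∂μ := by
          rw [setLIntegral_const]; push_cast; ring
      _ ≤ ∫⁻ ω in E, ((rootN (fun k => a k ω) : ℝ≥0∞)
            + ((2 * K - rootN (fun k => a k ω) : ℕ) : ℝ≥0∞)) ∂μ := by
          refine lintegral_mono fun ω => ?_
          rw [← Nat.cast_add]
          have : 2 * K ≤ rootN (fun k => a k ω) + (2 * K - rootN (fun k => a k ω)) := by omega
          exact Nat.cast_le.2 this
      _ = _ := lintegral_add_left (hN1.comp hA) _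
      _ ≤ I + I := add_le_add I1 (I3 ▸ I2)
  by_contra! hcon
  exact absurd I4 (not_le.2 (ENNReal.add_lt_add hcon hcon))
end

section
/- Let 0 ≤ L ≤ M with M ≥ 1, and let a_L, a_{L+1}, ..., a_M be independent, identically distributed real random variables. Let C(x) = ∑_{k=L}^{M} a_k cos(kx), and suppose the event E = {(a_L,...,a_M) ≠ 0} has positive probability. Then the conditional expectation of Z(C) given E is at least L + M; equivalently, E[Z(C)·1_E] ≥ (L+M) · P(E). -/
open Real Set
open scoped ENNReal

open MeasureTheory ProbabilityTheory

/-- `g` has a polar decomposition with angle increment `m π`. -/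
def Polar (g : ℝ → ℂ) : Prop :=
  ∃ (S θ : ℝ → ℝ) (m : ℕ), Continuous θ ∧ θ (2 * π) = θ 0 + m * π ∧
    ∀ x, g x = (S x : ℂ) * Complex.exp (θ x * Complex.I)

lemma Polar.const (c : ℂ) : Polar (fun _ => c) :=
  ⟨fun _ => ‖c‖, fun _ => c.arg, 0, by fun_prop, by simp, fun _ => by simp⟩

lemma Polar.mul {f g : ℝ → ℂ} (hf : Polar f) (hg : Polar g) : Polar (fun x => f x * g x) := by
  obtain ⟨S, θ, m, h1, h2, h3⟩ := hf
  obtain ⟨S', θ', m', h1', h2', h3'⟩ := hg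
  refine ⟨fun x => S x * S' x, fun x => θ x + θ' x, m + m', by fun_prop, ?_, fun x => ?_⟩
  · simp only [h2, h2']; push_cast; ring
  · simp only [h3, h3']; push_cast; rw [add_mul, Complex.exp_add]; ring

lemma Polar.slit (u : ℝ → ℂ) (hu : Continuous u) (h : ∀ x, ‖u x‖ < 1) (hp : u (2 * π) = u 0) :
    Polar (fun x => 1 - u x) := by
  refine ⟨fun x => ‖1 - u x‖, fun x => (1 - u x).arg, 0, ?_, by simp [hp], fun x => by simp⟩
  rw [continuous_iff_continuousAt]
  intro x
  have : (1 - u x) ∈ Complex.slitPlane := by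
    left
    have := Complex.re_le_norm (u x)
    have := h x
    simp; linarith
  have h2 : ContinuousAt (fun y => 1 - u y) x := by fun_prop
  exact ContinuousAt.comp (f := fun y => 1 - u y) (Complex.continuousAt_arg this) h2

lemma Polar.exp : Polar (fun x => Complex.exp (x * Complex.I)) :=
  ⟨fun _ => 1, fun x => x, 2, by fun_prop, by push_cast; ring, fun x => by simp⟩

lemma exp_two_pi_aux : Complex.exp (((2 * π : ℝ) : ℂ) * Complex.I) = 1 := by
  push_cast; exact Complex.exp_two_pi_mul_I

lemma Polar.linear (w : ℂ) : Polar (fun x => Complex.exp (x * Complex.I) - w) := by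
  rcases lt_trichotomy ‖w‖ 1 with h | h | h
  · have := Polar.exp.mul (Polar.slit (fun x => w * Complex.exp (-(x * Complex.I))) (by fun_prop)
      (fun x => by
        have : ‖Complex.exp (-(x * Complex.I))‖ = 1 := by
          simp [Complex.norm_exp]
        rw [norm_mul, this]; simpa using h)
      (by
        rw [Complex.exp_neg, exp_two_pi_aux]; simp))
    convert this using 2 with x
    rw [mul_sub, mul_left_comm, ← Complex.exp_add]; simp
  · refine ⟨fun x => 2 * Real.sin ((x - w.arg) / 2), fun x => (x + w.arg) / 2 + π / 2, 1,
      by fun_prop, by push_cast; ring, fun x => ?_⟩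
    have hw : w = Complex.exp (w.arg * Complex.I) := by
      conv_lhs => rw [← Complex.norm_mul_exp_arg_mul_I w, h]
      simp
    conv_lhs => rw [hw]
    generalize w.arg = α
    push_cast
    have e1 : (x : ℂ) * Complex.I = ((x - α) / 2) * Complex.I + ((x + α) / 2) * Complex.I := by ring
    have e2 : (α : ℂ) * Complex.I = -((x - α) / 2) * Complex.I + ((x + α) / 2) * Complex.I := by
      ring
    have e3 : Complex.exp ((π : ℂ) / 2 * Complex.I) = Complex.I := Complex.exp_pi_div_two_mul_I
    rw [Complex.sin, add_mul, Complex.exp_add _ ((π : ℂ) / 2 * Complex.I), e3, e1, e2,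
      Complex.exp_add, Complex.exp_add]
    linear_combination (-(Complex.exp (-((x - α) / 2) * Complex.I) - 
      Complex.exp (((x - α) / 2) * Complex.I)) * Complex.exp (((x + α) / 2) * Complex.I)) *
        Complex.I_mul_I
  · have hw : w ≠ 0 := by rintro rfl; simp at h; linarith
    have := (Polar.const (-w)).mul (Polar.slit (fun x => w⁻¹ * Complex.exp (x * Complex.I))
      (by fun_prop)
      (fun x => by
        rw [norm_mul, Complex.norm_exp_ofReal_mul_I, norm_inv, mul_one]
        exact inv_lt_one_of_one_lt₀ h)
      (by
        rw [exp_two_pi_aux]; simp))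
    convert this using 2 with x
    field_simp
    ring

lemma Polar.poly (P : Polynomial ℂ) : Polar (fun x => P.eval (Complex.exp (x * Complex.I))) := by
  have h := (IsAlgClosed.splits P).eval_eq_prod_roots
  simp only [h]
  refine (Polar.const _).mul ?_
  induction P.roots using Multiset.induction_on with
  | empty => simpa using Polar.const 1
  | cons w s ih => 
    simp only [Multiset.map_cons, Multiset.prod_cons]
    exact (Polar.linear w).mul ih

lemma cross (θ : ℝ → ℝ) (hθ : Continuous θ) (m : ℕ) (h : θ (2 * π) = θ 0 + m * π) :
    ∃ x : Fin m → ℝ, Function.Injective x ∧ ∀ i, x i ∈ Ico 0 (2 * π) ∧ Real.cos (θ (x i)) = 0 := by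
  have hpi := Real.pi_pos
  set j : ℤ := ⌈(θ 0 - π / 2) / π⌉ with hj
  have h1 : θ 0 - π / 2 ≤ j * π := by
    rw [← div_le_iff₀ hpi]; exact Int.le_ceil _
  have h2 : j * π < θ 0 - π / 2 + π := by
    have := Int.ceil_lt_add_one ((θ 0 - π / 2) / π)
    have := mul_lt_mul_of_pos_right this hpi
    rw [add_mul, div_mul_cancel₀ _ hpi.ne'] at this
    linarith
  have key : ∀ i : Fin m, ∃ x ∈ Ico 0 (2 * π), θ x = π / 2 + (j + (i : ℕ)) * π := by
    intro i
    have hi : ((i : ℕ) : ℝ) + 1 ≤ m := by exact_mod_cast i.2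
    have hi0 : (0 : ℝ) ≤ (i : ℕ) := by positivity
    have := mul_le_mul_of_nonneg_right hi hpi.le
    have := mul_nonneg hi0 hpi.le
    have hmem : π / 2 + (j + (i : ℕ)) * π ∈ Icc (θ 0) (θ (2 * π)) := by
      rw [h]; constructor <;> nlinarith
    obtain ⟨x, hx, hx'⟩ := intermediate_value_Icc (by positivity) hθ.continuousOn hmem
    refine ⟨x, ⟨hx.1, lt_of_le_of_ne hx.2 ?_⟩, hx'⟩
    rintro rfl
    rw [h] at hx'
    nlinarith
  choose x hx hx' using key
  refine ⟨x, fun i k hik => ?_, fun i => ⟨hx i, ?_⟩⟩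
  · have := hx' i
    rw [hik, hx' k] at this
    have : ((k : ℕ) : ℝ) = (i : ℕ) := by
      have := mul_right_cancel₀ hpi.ne' (add_left_cancel this)
      linarith
    exact Fin.ext (by exact_mod_cast this.symm)
  · rw [hx', Real.cos_eq_zero_iff]
    exact ⟨j + (i : ℕ), by push_cast; ring⟩

/-- the cosine polynomial -/
noncomputable def cosP (L n : ℕ) (v : Fin n → ℝ) (x : ℝ) : ℝ :=
  ∑ k : Fin n, v k * Real.cos ((L + (k : ℕ)) * x)

/-- coefficient vectors with at least `m` distinct zeros -/
def manyZ (L n m : ℕ) : Set (Fin n → ℝ) :=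
  {v | ∃ x : Fin m → ℝ, Function.Injective x ∧ ∀ i, x i ∈ Ico 0 (2 * π) ∧ cosP L n v (x i) = 0}

lemma manyZ_pair (L n : ℕ) (v : Fin (n + 1) → ℝ) :
    ∃ m m' : ℕ, 2 * (L + (L + n)) ≤ m + m' ∧ v ∈ manyZ L (n + 1) m ∧
      (fun k => v k.rev) ∈ manyZ L (n + 1) m' := by
  obtain ⟨S, θ, m, hc, hm, hS⟩ := Polar.poly
    (∑ k : Fin (n + 1), Polynomial.C (v k : ℂ) * Polynomial.X ^ (L + (k : ℕ)))
  have hS' : ∀ x : ℝ, ∑ k : Fin (n + 1), (v k : ℂ) * Complex.exp (((L + (k : ℕ)) * x : ℝ) * Complex.I)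
      = (S x : ℂ) * Complex.exp (θ x * Complex.I) := by
    intro x
    rw [← hS x]
    dsimp only
    rw [Polynomial.eval_finsetSum]
    refine Finset.sum_congr rfl fun k _ => ?_
    simp only [Polynomial.eval_mul, Polynomial.eval_C, Polynomial.eval_pow, Polynomial.eval_X]
    rw [← Complex.exp_nat_mul]
    congr 2; push_cast; ring
  have hcos : ∀ x, ∑ k : Fin (n + 1), v k * Real.cos ((L + (k : ℕ)) * x) = S x * Real.cos (θ x) := by
    intro x
    have := congrArg Complex.re (hS' x)
    simpa only [Complex.re_sum, Complex.re_ofReal_mul, Complex.exp_ofReal_mul_I_re] using this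
  have hsin : ∀ x, ∑ k : Fin (n + 1), v k * Real.sin ((L + (k : ℕ)) * x) = S x * Real.sin (θ x) := by
    intro x
    have := congrArg Complex.im (hS' x)
    simpa only [Complex.im_sum, Complex.im_ofReal_mul, Complex.exp_ofReal_mul_I_im] using this
  have hrev : ∀ x, cosP L (n + 1) (fun k => v k.rev) x
      = S x * Real.cos ((L + (L + n) : ℕ) * x - θ x) := by
    intro x
    rw [Real.cos_sub, mul_add, mul_left_comm, mul_left_comm (S x), ← hcos, ← hsin,
      Finset.mul_sum, Finset.mul_sum, ← Finset.sum_add_distrib, cosP,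
      ← Equiv.sum_comp Fin.revPerm]
    refine Finset.sum_congr rfl fun k _ => ?_
    have : ((L : ℝ) + ((Fin.rev k : Fin (n + 1)) : ℕ)) * x
        = ((L + (L + n) : ℕ) : ℝ) * x - (L + (k : ℕ)) * x := by
      have hk : (Fin.rev k : ℕ) + (k : ℕ) = n := by rw [Fin.val_rev]; omega
      have hk' : ((Fin.rev k : ℕ) : ℝ) + ((k : ℕ) : ℝ) = n := by exact_mod_cast hk
      push_cast; rw [← hk']; ring
    simp only [Fin.revPerm_apply, Fin.rev_rev]
    rw [this, Real.cos_sub]; ring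
  refine ⟨m, 2 * (L + (L + n)) - m, by omega, ?_, ?_⟩
  · obtain ⟨x, hx, hx'⟩ := cross θ hc m hm
    exact ⟨x, hx, fun i => ⟨(hx' i).1, by rw [cosP, hcos, (hx' i).2, mul_zero]⟩⟩
  · rcases le_total (2 * (L + (L + n))) m with h | h
    · rw [Nat.sub_eq_zero_of_le h]
      exact ⟨fun i => 0, fun i => i.elim0, fun i => i.elim0⟩
    · obtain ⟨x, hx, hx'⟩ := cross (fun x => (L + (L + n) : ℕ) * x - θ x) (by fun_prop)
        (2 * (L + (L + n)) - m) (by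
          rw [hm, Nat.cast_sub h]; push_cast; ring)
      exact ⟨x, hx, fun i => ⟨(hx' i).1, by rw [hrev, (hx' i).2, mul_zero]⟩⟩

lemma manyZ_meas (L n m : ℕ) : MeasurableSet (manyZ L n m) := by
  have hpi := Real.pi_pos
  set K : ℕ → Set ((Fin n → ℝ) × (Fin m → Icc (0 : ℝ) (2 * π))) := fun j =>
    {p | ∀ i, (p.2 i : ℝ) ≤ 2 * π - 1 / ((j : ℝ) + 1) ∧ cosP L n p.1 (p.2 i) = 0 ∧
      ∀ i', i ≠ i' → 1 / ((j : ℝ) + 1) ≤ |(p.2 i : ℝ) - p.2 i'|} with hK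
  have hcl : ∀ j, IsClosed (K j) := by
    intro j
    simp only [hK, Set.ofPred_forall, Set.ofPred_and]
    refine isClosed_iInter fun i => IsClosed.inter ?_ (IsClosed.inter ?_ ?_)
    · exact isClosed_le (by fun_prop) (by fun_prop)
    · exact isClosed_eq (by unfold cosP; fun_prop) (by fun_prop)
    · refine isClosed_iInter fun i' => isClosed_iInter fun _ => ?_
      exact isClosed_le (by fun_prop) (by fun_prop)
  have : manyZ L n m = ⋃ j, Prod.fst '' K j := by
    ext v
    simp only [mem_iUnion, Set.mem_image, Prod.exists, exists_and_right, exists_eq_right]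
    constructor
    · rintro ⟨x, hx, hx'⟩
      have e1 : ∀ i, ∀ᶠ j : ℕ in Filter.atTop, 1 / ((j : ℝ) + 1) < 2 * π - x i := fun i =>
        tendsto_one_div_add_atTop_nhds_zero_nat.eventually_lt_const (by linarith [(hx' i).1.2])
      have e2 : ∀ i i', ∀ᶠ j : ℕ in Filter.atTop, i ≠ i' → 1 / ((j : ℝ) + 1) < |x i - x i'| := by
        intro i i'
        by_cases h : i = i'
        · simp [h]
        · have : 0 < |x i - x i'| := abs_pos.2 (sub_ne_zero.2 fun h' => h (hx h'))
          filter_upwards [tendsto_one_div_add_atTop_nhds_zero_nat.eventually_lt_const this] with j hj _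
            using hj
      obtain ⟨j, hj1, hj2⟩ := ((Filter.eventually_all.2 e1).and
        (Filter.eventually_all.2 fun i => Filter.eventually_all.2 (e2 i))).exists
      refine ⟨j, fun i => ⟨x i, (hx' i).1.1, (hx' i).1.2.le⟩, fun i => ⟨?_, (hx' i).2, ?_⟩⟩
      · have := hj1 i
        dsimp only; linarith
      · exact fun i' h => (hj2 i i' h).le
    · rintro ⟨j, x, hx⟩
      have hj : 0 < 1 / ((j : ℝ) + 1) := by positivity
      refine ⟨fun i => x i, fun i i' h => ?_, fun i => ⟨⟨(x i).2.1, ?_⟩, (hx i).2.1⟩⟩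
      · by_contra hne
        have := (hx i).2.2 i' hne
        dsimp only at h this
        rw [h, sub_self, abs_zero] at this
        linarith
      · have := (hx i).1
        dsimp only at this
        linarith
  rw [this]
  exact MeasurableSet.iUnion fun j => (isClosedMap_fst_of_compactSpace _ (hcl j)).measurableSet

lemma cosP_ne (L n : ℕ) (v : Fin n → ℝ) (h : ∀ x, cosP L n v x = 0) : v = 0 := by
  set N := L + n
  set Q : Polynomial ℂ := ∑ k : Fin n, Polynomial.C (v k : ℂ) *
    (Polynomial.X ^ (N + (L + (k : ℕ))) + Polynomial.X ^ (N - (L + (k : ℕ)))) with hQ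
  have hroot : ∀ x : ℝ, Q.eval (Complex.exp (x * Complex.I)) = 0 := by
    intro x
    have h1 : Q.eval (Complex.exp (x * Complex.I))
        = 2 * Complex.exp (x * Complex.I) ^ N * ((cosP L n v x : ℝ) : ℂ) := by
      rw [hQ, Polynomial.eval_finsetSum, cosP]
      push_cast
      rw [Finset.mul_sum]
      refine Finset.sum_congr rfl fun k _ => ?_
      have hk : L + (k : ℕ) ≤ N := by have := k.2; omega
      simp only [Polynomial.eval_mul, Polynomial.eval_C, Polynomial.eval_pow, Polynomial.eval_X,
        Polynomial.eval_add]
      rw [pow_add, pow_sub₀ _ (Complex.exp_ne_zero _) hk, Complex.cos, ← Complex.exp_nat_mul _ (L + (k : ℕ)),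
        ← Complex.exp_neg]
      have e1 : ((L + (k : ℕ) : ℕ) : ℂ) * (x * Complex.I) = ((L : ℂ) + (k : ℕ)) * x * Complex.I := by
        push_cast; ring
      rw [e1, neg_mul]; ring
    rw [h1, h]; simp
  have hQ0 : Q = 0 := by
    apply Polynomial.eq_zero_of_infinite_isRoot
    refine Set.Infinite.mono (s := (fun x : ℝ => Complex.exp (x * Complex.I)) '' Ioc (-π) π) ?_ ?_
    · rintro _ ⟨x, _, rfl⟩
      exact hroot x
    · refine Set.Infinite.image ?_ (Set.Ioc_infinite (by linarith [Real.pi_pos]))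
      intro x hx y hy hxy
      have := congrArg Complex.arg hxy
      simpa only [Complex.arg_exp_mul_I, toIocMod_eq_self .. |>.2 (show x ∈ Ioc (-π) (-π + 2 * π) by
          constructor <;> linarith [hx.1, hx.2]),
        toIocMod_eq_self .. |>.2 (show y ∈ Ioc (-π) (-π + 2 * π) by
          constructor <;> linarith [hy.1, hy.2])] using this
  ext j
  have hcoef := congrArg (fun q => q.coeff (N + (L + (j : ℕ)))) hQ0
  simp only [hQ, Polynomial.finsetSum_coeff, Polynomial.coeff_C_mul, Polynomial.coeff_add,
    Polynomial.coeff_X_pow, Polynomial.coeff_zero] at hcoef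
  rw [Finset.sum_eq_single j] at hcoef
  · rcases mul_eq_zero.1 hcoef with h | h
    · simpa using h
    · exfalso
      split_ifs at h <;> norm_num at h
      omega
  · intro k _ hk
    have hk' : (k : ℕ) ≠ j := fun h => hk (Fin.ext h)
    have := k.2
    rw [if_neg (by omega), if_neg (by omega)]; simp
  · simp

lemma zeroMult_pos_s2 (L n : ℕ) (v : Fin n → ℝ) (hv : v ≠ 0) (x : ℝ) (hx : cosP L n v x = 0) :
    1 ≤ zeroMult (cosP L n v) x := by
  have han : ∀ y, AnalyticAt ℝ (cosP L n v) y := by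
    intro y; unfold cosP; fun_prop
  have hne : {n' : ℕ | 1 ≤ n' ∧ iteratedDeriv n' (cosP L n v) x ≠ 0}.Nonempty := by
    by_contra hcon
    rw [Set.not_nonempty_iff_eq_empty, Set.eq_empty_iff_forall_notMem] at hcon
    have hall : ∀ i, iteratedDeriv i (cosP L n v) x = 0 := by
      intro i
      rcases Nat.eq_zero_or_pos i with rfl | hi
      · simpa using hx
      · by_contra h
        exact hcon i ⟨hi, h⟩
    have htop : analyticOrderAt (cosP L n v) x = ⊤ := by
      rw [ENat.eq_top_iff_forall_ge]
      intro m
      exact (natCast_le_analyticOrderAt_iff_iteratedDeriv_eq_zero (han x)).2 fun i _ => hall i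
    rw [analyticOrderAt_eq_top] at htop
    have hz := AnalyticOnNhd.eqOn_zero_of_preconnected_of_eventuallyEq_zero
      (fun y _ => han y) isPreconnected_univ (mem_univ x) htop
    exact hv (cosP_ne L n v fun y => hz (mem_univ y))
  exact (Nat.sInf_mem hne).1

lemma le_Zcount (L n m : ℕ) (v : Fin n → ℝ) (hv : v ≠ 0) (h : v ∈ manyZ L n m) :
    (m : ℝ≥0∞) ≤ Zcount (cosP L n v) := by
  obtain ⟨x, hx, hx'⟩ := h
  let y : Fin m ↪ {x : ℝ // x ∈ Set.Ico (0 : ℝ) (2 * Real.pi) ∧ cosP L n v x = 0} :=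
    ⟨fun i => ⟨x i, hx' i⟩, fun i j hij => hx (congrArg Subtype.val hij)⟩
  calc (m : ℝ≥0∞) = ∑ i ∈ Finset.univ.map y, 1 := by simp
    _ ≤ ∑ i ∈ Finset.univ.map y, (zeroMult (cosP L n v) i.1 : ℝ≥0∞) := by
        refine Finset.sum_le_sum fun i _ => ?_
        exact_mod_cast zeroMult_pos_s2 L n v hv i.1 i.2.2
    _ ≤ _ := ENNReal.sum_le_tsum _

/-- measurable lower bound -/
noncomputable def lowZ (L n : ℕ) : (Fin n → ℝ) → ℝ≥0∞ :=
  fun v => ⨆ m : ℕ, (manyZ L n m).indicator (fun _ => (m : ℝ≥0∞)) v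

lemma lowZ_meas (L n : ℕ) : Measurable (lowZ L n) :=
  Measurable.iSup fun m => measurable_const.indicator (manyZ_meas L n m)

lemma le_lowZ (L n m : ℕ) (v : Fin n → ℝ) (h : v ∈ manyZ L n m) : (m : ℝ≥0∞) ≤ lowZ L n v := by
  refine le_trans ?_ (le_iSup _ m)
  rw [Set.indicator_of_mem h]

lemma lowZ_le (L n : ℕ) (v : Fin n → ℝ) (hv : v ≠ 0) : lowZ L n v ≤ Zcount (cosP L n v) := by
  refine iSup_le fun m => ?_
  by_cases h : v ∈ manyZ L n m
  · rw [Set.indicator_of_mem h]; exact le_Zcount L n m v hv h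
  · rw [Set.indicator_of_notMem h]; exact bot_le

lemma lowZ_pair (L n : ℕ) (v : Fin (n + 1) → ℝ) :
    ((2 * (L + (L + n)) : ℕ) : ℝ≥0∞) ≤ lowZ L (n + 1) v + lowZ L (n + 1) (fun k => v k.rev) := by
  obtain ⟨m, m', h, h1, h2⟩ := manyZ_pair L n v
  refine le_trans ?_ (add_le_add (le_lowZ _ _ _ _ h1) (le_lowZ _ _ _ _ h2))
  exact_mod_cast h

theorem iid_random_cosine_expected_zeros
    {Ω : Type*} [MeasurableSpace Ω] (μ : Measure Ω) [IsProbabilityMeasure μ]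
    (L M : ℕ) (hLM : L ≤ M) (hM : 1 ≤ M)
    (a : Fin (M - L + 1) → Ω → ℝ)
    (hmeas : ∀ k, Measurable (a k))
    (hindep : iIndepFun a μ)
    (hident : ∀ i j, Measure.map (a i) μ = Measure.map (a j) μ)
    (hE : 0 < μ {ω | ∃ k, a k ω ≠ 0}) :
    ((L + M : ℕ) : ℝ≥0∞) * μ {ω | ∃ k, a k ω ≠ 0} ≤
      ∫⁻ ω in {ω | ∃ k, a k ω ≠ 0},
        Zcount (fun x => ∑ k : Fin (M - L + 1), a k ω * Real.cos ((L + (k : ℕ)) * x)) ∂μ := by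
  have hEm : MeasurableSet {ω | ∃ k, a k ω ≠ 0} := by
    rw [Set.ofPred_exists]
    exact MeasurableSet.iUnion fun k => (hmeas k) (measurableSet_singleton (0 : ℝ)).compl
  set E := {ω | ∃ k, a k ω ≠ 0} with hEdef
  have hmap : Measure.map (fun ω k => a k ω) μ = Measure.map (fun ω k => a (Fin.rev k) ω) μ := by
    rw [(iIndepFun_iff_map_fun_eq_pi_map (fun k => (hmeas k).aemeasurable)).1 hindep,
      (iIndepFun_iff_map_fun_eq_pi_map (fun k => (hmeas (Fin.rev k)).aemeasurable)).1
        (hindep.precomp (g := Fin.rev) Fin.rev_injective)]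
    congr 1
    ext1 k
    exact hident _ _
  have hA : Measurable (fun ω k => a k ω) := measurable_pi_lambda _ hmeas
  have hB : Measurable (fun ω k => a (Fin.rev k) ω) := measurable_pi_lambda _ fun k => hmeas _
  have hne : ∀ ω ∈ E, (fun k => a k ω) ≠ 0 := by
    rintro ω ⟨k, hk⟩ h
    exact hk (congrFun h k)
  set G := lowZ L (M - L + 1)
  have hG : Measurable G := lowZ_meas _ _
  set H : (Fin (M - L + 1) → ℝ) → ℝ≥0∞ := ({0}ᶜ : Set (Fin (M - L + 1) → ℝ)).indicator G
  have hH : Measurable H := hG.indicator (measurableSet_singleton _).compl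
  have H1 : ∀ v, v ≠ 0 → H v = G v := fun v hv => Set.indicator_of_mem (by simpa using hv) _
  have H0 : ∀ v, v = 0 → H v = 0 := fun v hv => Set.indicator_of_notMem (by simpa using hv) _
  have e1 : ∫⁻ ω in E, G (fun k => a k ω) ∂μ = ∫⁻ ω, H (fun k => a k ω) ∂μ := by
    rw [← lintegral_indicator hEm]
    refine lintegral_congr fun ω => ?_
    by_cases h : ω ∈ E
    · rw [Set.indicator_of_mem h, H1 _ (hne ω h)]
    · rw [Set.indicator_of_notMem h, H0]
      have : ∀ k, a k ω = 0 := by simpa [hEdef] using h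
      exact funext this
  have e2 : ∫⁻ ω in E, G (fun k => a (Fin.rev k) ω) ∂μ = ∫⁻ ω, H (fun k => a (Fin.rev k) ω) ∂μ := by
    rw [← lintegral_indicator hEm]
    refine lintegral_congr fun ω => ?_
    by_cases h : ω ∈ E
    · rw [Set.indicator_of_mem h, H1]
      obtain ⟨k, hk⟩ := h
      intro h0
      apply hk
      simpa using congrFun h0 (Fin.rev k)
    · rw [Set.indicator_of_notMem h, H0]
      have : ∀ k, a k ω = 0 := by simpa [hEdef] using h
      exact funext fun k => this _
  have e3 : ∫⁻ ω, H (fun k => a k ω) ∂μ = ∫⁻ ω, H (fun k => a (Fin.rev k) ω) ∂μ := by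
    rw [← lintegral_map hH hA, hmap, lintegral_map hH hB]
  have hsum : ((2 * (L + M) : ℕ) : ℝ≥0∞) * μ E ≤ 2 * ∫⁻ ω in E, G (fun k => a k ω) ∂μ := by
    have e4 := e1.trans (e3.trans e2.symm)
    rw [two_mul (∫⁻ ω in E, G (fun k => a k ω) ∂μ)]
    nth_rewrite 2 [e4]
    rw [← lintegral_add_left (f := fun ω => G (fun k => a k ω)) (hG.comp hA), ← setLIntegral_const]
    refine lintegral_mono fun ω => ?_
    have := lowZ_pair L (M - L) (fun k => a k ω)
    rwa [Nat.add_sub_cancel' hLM] at this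
  have hfin : ((L + M : ℕ) : ℝ≥0∞) * μ E ≤ ∫⁻ ω in E, G (fun k => a k ω) ∂μ := by
    rw [Nat.cast_mul, mul_assoc] at hsum
    exact (ENNReal.mul_le_mul_iff_right (by norm_num) (by norm_num)).1 hsum
  refine hfin.trans (setLIntegral_mono' hEm fun ω hω => ?_)
  exact lowZ_le L _ _ (hne ω hω)
end

section
/- Let K ≥ 1 and let b = (b_0, b_1, ..., b_K) be real numbers. Define the sine polynomials S_b(x) = ∑_{k=0}^{K} b_k sin(kx) and S_b̄(x) = ∑_{k=0}^{K} b_{K-k} sin(kx). If neither S_b nor S_b̄ is identically zero, then Z(S_b) + Z(S_b̄) ≥ 2K, where Z(f) denotes the number of zeros of f in [0, 2π) counted with multiplicity. -/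
open Real Set
open scoped ENNReal

lemma pal_mult_pos (f : ℝ → ℝ) (hf : AnalyticOnNhd ℝ f Set.univ) (hne : ∃ x, f x ≠ 0)
    (x : ℝ) (hx : f x = 0) : 1 ≤ zeroMult f x := by
  have hS : {n : ℕ | 1 ≤ n ∧ iteratedDeriv n f x ≠ 0}.Nonempty := by
    by_contra hcon
    rw [Set.not_nonempty_iff_eq_empty] at hcon
    have hall : ∀ n, iteratedDeriv n f x = 0 := by
      intro n
      rcases Nat.eq_zero_or_pos n with h | h
      · subst h; simpa using hx
      · by_contra h2
        have : n ∈ {n : ℕ | 1 ≤ n ∧ iteratedDeriv n f x ≠ 0} := ⟨h, h2⟩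
        rw [hcon] at this
        exact this
    have htop : analyticOrderAt f x = ⊤ := by
      rw [ENat.eq_top_iff_forall_ge]
      intro n
      exact (natCast_le_analyticOrderAt_iff_iteratedDeriv_eq_zero (hf x (Set.mem_univ x))).2
        (fun i _ => hall i)
    rw [analyticOrderAt_eq_top] at htop
    have h0 : f = fun _ => (0 : ℝ) :=
      hf.eq_of_eventuallyEq (z₀ := x) (fun y _ => analyticAt_const) htop
    obtain ⟨y, hy⟩ := hne
    exact hy (by rw [h0])
  exact (Nat.sInf_mem hS).1

lemma pal_card_le (f : ℝ → ℝ) (hf : AnalyticOnNhd ℝ f Set.univ) (hne : ∃ x, f x ≠ 0)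
    (J : Finset ℕ) (y : ℕ → ℝ)
    (hy : ∀ j ∈ J, y j ∈ Set.Ico (0 : ℝ) (2 * Real.pi) ∧ f (y j) = 0)
    (hinj : ∀ i ∈ J, ∀ j ∈ J, y i = y j → i = j) : (J.card : ℝ≥0∞) ≤ Zcount f := by
  let φ : J → {x : ℝ // x ∈ Set.Ico (0 : ℝ) (2 * Real.pi) ∧ f x = 0} :=
    fun j => ⟨y j.1, hy j.1 j.2⟩
  have hφ : Function.Injective φ := by
    intro i j h
    exact Subtype.ext (hinj i.1 i.2 j.1 j.2 (congrArg Subtype.val h))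
  have h1 := ENNReal.tsum_comp_le_tsum_of_injective hφ
    (fun x => (zeroMult f x.1 : ℝ≥0∞))
  refine le_trans ?_ h1
  rw [tsum_fintype]
  calc (J.card : ℝ≥0∞) = ∑ _j : J, (1 : ℝ≥0∞) := by simp
    _ ≤ _ := by
      apply Finset.sum_le_sum
      intro j _
      exact_mod_cast pal_mult_pos f hf hne _ (φ j).2.2

lemma pal_analytic (K : ℕ) (b : Fin (K + 1) → ℝ) :
    AnalyticOnNhd ℝ (fun x => ∑ k : Fin (K + 1), b k * Real.sin ((k : ℕ) * x)) Set.univ := by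
  intro x _
  fun_prop

lemma pal_node (K : ℕ) (b : Fin (K + 1) → ℝ) (j : ℕ) (x : ℝ) (hx : (K : ℝ) * x = j * π) :
    (∑ k : Fin (K + 1), b (Fin.rev k) * Real.sin ((k : ℕ) * x)) =
      -((-1) ^ j * ∑ k : Fin (K + 1), b k * Real.sin ((k : ℕ) * x)) := by
  rw [← Equiv.sum_comp Fin.revPerm, Finset.mul_sum, ← Finset.sum_neg_distrib]
  refine Finset.sum_congr rfl fun k _ => ?_
  have hk : ((Fin.rev k : Fin (K + 1)) : ℕ) + (k : ℕ) = K := by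
    rw [Fin.val_rev]; omega
  have hk' : (((Fin.rev k : Fin (K + 1)) : ℕ) : ℝ) = K - (k : ℕ) := by
    rw [eq_sub_iff_add_eq]; exact_mod_cast hk
  simp only [Fin.revPerm_apply, Fin.rev_rev]
  rw [hk', sub_mul, hx, Real.sin_nat_mul_pi_sub]
  ring

lemma pal_interval (f g : ℝ → ℝ) (hf : Continuous f) (hg : Continuous g) (a c s : ℝ)
    (hac : a < c) (hs : s ^ 2 = 1) (ha : g a = s * f a) (hc : g c = -s * f c) :
    (∃ y, (a ≤ y ∧ y < c) ∧ f y = 0) ∨ (∃ y, (a < y ∧ y ≤ c) ∧ g y = 0) := by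
  by_cases h1 : f a = 0
  · exact Or.inl ⟨a, ⟨le_rfl, hac⟩, h1⟩
  by_cases h2 : g c = 0
  · exact Or.inr ⟨c, ⟨hac, le_rfl⟩, h2⟩
  have h3 : f c ≠ 0 := by
    intro h; apply h2; rw [hc, h, mul_zero]
  have hp1 : 0 < f a ^ 2 := by positivity
  have hp2 : 0 < f c ^ 2 := by positivity
  have hs' : s = 1 ∨ s = -1 := by
    have : (s - 1) * (s + 1) = 0 := by linarith [hs, sq s, mul_comm s 1, (by ring : (s - 1) * (s + 1) = s ^ 2 - 1)]
    rcases mul_eq_zero.1 this with h | h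
    · left; linarith
    · right; linarith
  have hcont : Continuous (fun x => f x * g x) := hf.mul hg
  have hz : ∃ y ∈ Set.Icc a c, f y * g y = 0 := by
    rcases hs' with h | h
    · subst h
      have := intermediate_value_Icc' hac.le hcont.continuousOn
      exact this ⟨by simp only [hc]; nlinarith, by simp only [ha]; nlinarith⟩
    · subst h
      have := intermediate_value_Icc hac.le hcont.continuousOn
      exact this ⟨by simp only [ha]; nlinarith, by simp only [hc]; nlinarith⟩
  obtain ⟨y, ⟨hy1, hy2⟩, hy⟩ := hz
  rcases mul_eq_zero.1 hy with h | h
  · refine Or.inl ⟨y, ⟨hy1, lt_of_le_of_ne hy2 ?_⟩, h⟩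
    rintro rfl; exact h3 h
  · refine Or.inr ⟨y, ⟨lt_of_le_of_ne hy1 ?_, hy2⟩, h⟩
    rintro rfl
    rw [ha] at h
    rcases mul_eq_zero.1 h with h | h
    · rw [h] at hs; norm_num at hs
    · exact h1 h

theorem palindromic_sine_zero_count (K : ℕ) (hK : 1 ≤ K) (b : Fin (K + 1) → ℝ)
    (hb : ∃ x, (∑ k : Fin (K + 1), b k * Real.sin ((k : ℕ) * x)) ≠ 0)
    (hb' : ∃ x, (∑ k : Fin (K + 1), b (Fin.rev k) * Real.sin ((k : ℕ) * x)) ≠ 0) :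
    (2 * K : ℝ≥0∞) ≤
      Zcount (fun x => ∑ k : Fin (K + 1), b k * Real.sin ((k : ℕ) * x)) +
      Zcount (fun x => ∑ k : Fin (K + 1), b (Fin.rev k) * Real.sin ((k : ℕ) * x)) := by
  classical
  have haf := pal_analytic K b
  have hag := pal_analytic K (fun k => b (Fin.rev k))
  have hnode := pal_node K b
  have hg0 : (∑ k : Fin (K + 1), b (Fin.rev k) * Real.sin ((k : ℕ) * 0)) = 0 := by simp
  have hcf : Continuous (fun x => ∑ k : Fin (K + 1), b k * Real.sin ((k : ℕ) * x)) := by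
    fun_prop
  have hcg : Continuous
      (fun x => ∑ k : Fin (K + 1), b (Fin.rev k) * Real.sin ((k : ℕ) * x)) := by
    fun_prop
  set f : ℝ → ℝ := fun x => ∑ k : Fin (K + 1), b k * Real.sin ((k : ℕ) * x) with hfdef
  set g : ℝ → ℝ := fun x => ∑ k : Fin (K + 1), b (Fin.rev k) * Real.sin ((k : ℕ) * x) with hgdef
  change ∀ (j : ℕ) (x : ℝ), (K : ℝ) * x = j * π → g x = -((-1) ^ j * f x) at hnode
  change g 0 = 0 at hg0
  have hKpos : (0 : ℝ) < K := by exact_mod_cast hK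
  have hpi := Real.pi_pos
  let X : ℕ → ℝ := fun j => j * π / K
  have hX : ∀ j, (K : ℝ) * X j = j * π := by
    intro j; simp only [X]; field_simp
  have hXmono : Monotone X := by
    intro i j hij
    have : (i : ℝ) ≤ j := by exact_mod_cast hij
    simp only [X]; gcongr
  have hXlt : ∀ j, X j < X (j + 1) := by
    intro j
    simp only [X]
    push_cast
    gcongr
    linarith
  have hX0 : ∀ j, 0 ≤ X j := by intro j; simp only [X]; positivity
  have hX2 : ∀ j < 2 * K, X (j + 1) ≤ 2 * π := by
    intro j hj
    have h2 : X (2 * K) = 2 * π := by simp only [X]; push_cast; field_simp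
    rw [← h2]
    exact hXmono hj
  have key : ∀ j, (∃ y, (X j ≤ y ∧ y < X (j + 1)) ∧ f y = 0) ∨
      (∃ y, (X j < y ∧ y ≤ X (j + 1)) ∧ g y = 0) := by
    intro j
    refine pal_interval f g hcf hcg _ _ (-(-1) ^ j) (hXlt j) ?_ ?_ ?_
    · rw [neg_sq, ← pow_mul, mul_comm, pow_mul]; simp
    · rw [hnode j _ (hX j)]; ring
    · rw [hnode (j + 1) _ (hX (j + 1))]; ring
  let P : ℕ → Prop := fun j => ∃ y, (X j ≤ y ∧ y < X (j + 1)) ∧ f y = 0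
  let Q : ℕ → Prop := fun j => ∃ y, (X j < y ∧ y ≤ X (j + 1)) ∧ g y = 0
  let J := (Finset.range (2 * K)).filter P
  let L := (Finset.range (2 * K)).filter Q
  have hcard : 2 * K ≤ J.card + L.card := by
    have : Finset.range (2 * K) ⊆ J ∪ L := by
      intro j hj
      rw [Finset.mem_union, Finset.mem_filter, Finset.mem_filter]
      rcases key j with h | h
      · exact Or.inl ⟨hj, h⟩
      · exact Or.inr ⟨hj, h⟩
    have h1 := Finset.card_le_card this
    have h2 := Finset.card_union_le J L
    rw [Finset.card_range] at h1
    omega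
  have hJ : (J.card : ℝ≥0∞) ≤ Zcount f := by
    have hex : ∀ j, ∃ y, j ∈ J → (X j ≤ y ∧ y < X (j + 1)) ∧ f y = 0 := by
      intro j
      by_cases h : j ∈ J
      · obtain ⟨y, hy⟩ := (Finset.mem_filter.1 h).2
        exact ⟨y, fun _ => hy⟩
      · exact ⟨0, fun h' => absurd h' h⟩
    choose y hy using hex
    have hlt : ∀ i ∈ J, ∀ j ∈ J, i < j → y i < y j := by
      intro i hi j hj hij
      exact lt_of_lt_of_le (hy i hi).1.2 ((hXmono hij).trans (hy j hj).1.1)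
    refine pal_card_le f haf hb J y ?_ ?_
    · intro j hj
      have hr := Finset.mem_range.1 (Finset.mem_filter.1 hj).1
      exact ⟨⟨(hX0 j).trans (hy j hj).1.1, (hy j hj).1.2.trans_le (hX2 j hr)⟩, (hy j hj).2⟩
    · intro i hi j hj hij
      rcases lt_trichotomy i j with h | h | h
      · exact absurd hij (hlt i hi j hj h).ne
      · exact h
      · exact absurd hij (hlt j hj i hi h).ne'
  have hL : (L.card : ℝ≥0∞) ≤ Zcount g := by
    have hex : ∀ j, ∃ y, j ∈ L → (X j < y ∧ y ≤ X (j + 1)) ∧ g y = 0 := by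
      intro j
      by_cases h : j ∈ L
      · obtain ⟨y, hy⟩ := (Finset.mem_filter.1 h).2
        exact ⟨y, fun _ => hy⟩
      · exact ⟨0, fun h' => absurd h' h⟩
    choose y hy using hex
    have hlt : ∀ i ∈ L, ∀ j ∈ L, i < j → y i < y j := by
      intro i hi j hj hij
      exact lt_of_le_of_lt (hy i hi).1.2 ((hXmono hij).trans_lt (hy j hj).1.1)
    have hinj : ∀ i ∈ L, ∀ j ∈ L, y i = y j → i = j := by
      intro i hi j hj hij
      rcases lt_trichotomy i j with h | h | h
      · exact absurd hij (hlt i hi j hj h).ne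
      · exact h
      · exact absurd hij (hlt j hj i hi h).ne'
    have hpos : ∀ j ∈ L, 0 < y j := fun j hj => (hX0 j).trans_lt (hy j hj).1.1
    refine pal_card_le g hag hb' L (fun j => if y j = 2 * π then 0 else y j) ?_ ?_
    · intro j hj
      have hr := Finset.mem_range.1 (Finset.mem_filter.1 hj).1
      by_cases h : y j = 2 * π
      · simp only [h, if_true]
        exact ⟨⟨le_rfl, by positivity⟩, hg0⟩
      · simp only [h, if_false]
        exact ⟨⟨(hpos j hj).le, lt_of_le_of_ne ((hy j hj).1.2.trans (hX2 j hr)) h⟩, (hy j hj).2⟩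
    · intro i hi j hj hij
      have h1 := hpos i hi
      have h2 := hpos j hj
      apply hinj i hi j hj
      by_cases h : y i = 2 * π <;> by_cases h' : y j = 2 * π <;>
        simp only [h, h', if_true, if_false] at hij ⊢ <;> linarith
  calc (2 * K : ℝ≥0∞) = ((2 * K : ℕ) : ℝ≥0∞) := by push_cast; rfl
    _ ≤ ((J.card + L.card : ℕ) : ℝ≥0∞) := by exact_mod_cast hcard
    _ = (J.card : ℝ≥0∞) + (L.card : ℝ≥0∞) := by push_cast; rfl
    _ ≤ _ := add_le_add hJ hL
end

section
/- Let K ≥ 0 and let f(x) = ∑_{k=0}^{K} (a_k cos(kx) + b_k sin(kx)) be a real trigonometric polynomial of degree at most K that is not identically zero. Then f has at most 2K zeros in [0, 2π), counted with multiplicity, where the multiplicity of a zero x₀ is the least n ≥ 1 such that the n-th derivative of f at x₀ is nonzero. -/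
open Real Set
open scoped ENNReal

open Polynomial in
theorem trig_aux_dvd (K : ℕ) (x₀ : ℝ) (n : ℕ) : ∀ (f : ℝ → ℝ) (P : ℂ[X]),
    (∀ x : ℝ, ((f x : ℝ) : ℂ) = Complex.exp (-(K * (x * Complex.I))) *
      P.eval (Complex.exp (x * Complex.I))) →
    (∀ j < n, iteratedDeriv j f x₀ = 0) →
    (X - C (Complex.exp (x₀ * Complex.I))) ^ n ∣ P := by
  induction n with
  | zero => intro f P _ _; simp
  | succ n ih =>
    intro f P hf hj
    have h1 := ih f P hf (fun j hjn => hj j (by omega))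
    have hd : ∀ x : ℝ, HasDerivAt f (deriv f x) x ∧ ((deriv f x : ℝ) : ℂ) =
        Complex.exp (-(K * (x * Complex.I))) *
        (C Complex.I * (X * derivative P - C (K : ℂ) * P)).eval (Complex.exp (x * Complex.I)) := by
      intro x
      have hx : HasDerivAt (fun y : ℝ => (y : ℂ) * Complex.I) Complex.I x := by
        simpa using (Complex.ofRealCLM.hasDerivAt (x := x)).mul_const Complex.I
      have he := hx.cexp
      have hk := ((hx.const_mul (K : ℂ)).neg).cexp
      have hP := (P.hasDerivAt (Complex.exp (x * Complex.I))).comp x he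
      have hF := hk.mul hP
      have hF2 : HasDerivAt (fun y : ℝ => ((f y : ℝ) : ℂ)) (Complex.exp (-(K * (x * Complex.I))) *
        (C Complex.I * (X * derivative P - C (K : ℂ) * P)).eval (Complex.exp (x * Complex.I))) x := by
        refine (hF.congr_deriv ?_).congr_of_eventuallyEq (Filter.Eventually.of_forall fun y => ?_)
        · simp; ring
        · simpa using hf y
      have hr : DifferentiableAt ℝ f x := by
        have := (Complex.reCLM.hasFDerivAt.comp_hasDerivAt x hF2).differentiableAt
        simpa [Function.comp_def] using this
      have hr' : HasDerivAt f (deriv f x) x := hr.hasDerivAt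
      exact ⟨hr', (hr'.ofReal_comp).unique hF2⟩
    have h2 := ih (deriv f) _ (fun x => (hd x).2) (fun j hjn => by
      have := hj (j + 1) (by omega)
      rwa [iteratedDeriv_succ'] at this)
    set z := Complex.exp (x₀ * Complex.I) with hz
    have hz0 : z ≠ 0 := Complex.exp_ne_zero _
    have hroot : P.eval z = 0 := by
      have h0 := hj 0 (by omega)
      have := hf x₀
      rw [iteratedDeriv_zero] at h0
      rw [h0] at this
      simpa using this.symm
    have hu : IsUnit (C Complex.I : ℂ[X]) := isUnit_C.2 (isUnit_iff_ne_zero.2 Complex.I_ne_zero)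
    have h3 : (X - C z) ^ n ∣ X * derivative P := by
      have h4 := (hu.dvd_mul_left).1 h2
      exact (dvd_sub_left (h1.mul_left _)).1 h4
    have hc : IsCoprime ((X - C z) ^ n) (X : ℂ[X]) := by
      apply IsCoprime.pow_left
      have := isCoprime_X_sub_C_of_isUnit_sub (a := z) (b := 0) (by simpa using hz0)
      simpa using this
    have h5 := hc.dvd_of_dvd_mul_left h3
    by_cases hP : P = 0
    · simp [hP]
    by_cases hP' : derivative P = 0
    · exfalso
      have := derivative_eq_zero.1 hP'
      rw [eq_C_of_natDegree_eq_zero this] at hroot hP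
      simp at hroot
      simp [hroot] at hP
    rw [← le_rootMultiplicity_iff hP]
    rw [← le_rootMultiplicity_iff hP'] at h5
    have h6 := derivative_rootMultiplicity_of_root (p := P) (t := z) hroot
    have h7 := (rootMultiplicity_pos hP).2 (show P.IsRoot z from hroot)
    omega

open Polynomial in
theorem trig_poly_zero_count_le (K : ℕ) (a b : ℕ → ℝ)
    (h : ∃ x, (∑ k ∈ Finset.range (K + 1),
        (a k * Real.cos ((k : ℝ) * x) + b k * Real.sin ((k : ℝ) * x))) ≠ 0) :
    Zcount (fun x => ∑ k ∈ Finset.range (K + 1),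
        (a k * Real.cos ((k : ℝ) * x) + b k * Real.sin ((k : ℝ) * x))) ≤ (2 * K : ℝ≥0∞) := by
  set f : ℝ → ℝ := fun x => ∑ k ∈ Finset.range (K + 1),
        (a k * Real.cos ((k : ℝ) * x) + b k * Real.sin ((k : ℝ) * x)) with hfdef
  set P : ℂ[X] := ∑ k ∈ Finset.range (K + 1),
    (C (((a k : ℂ) - b k * Complex.I) / 2) * X ^ (K + k) +
      C (((a k : ℂ) + b k * Complex.I) / 2) * X ^ (K - k)) with hPdef
  have hf : ∀ x : ℝ, ((f x : ℝ) : ℂ) = Complex.exp (-(K * (x * Complex.I))) *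
      P.eval (Complex.exp (x * Complex.I)) := by
    intro x
    rw [hPdef, eval_finsetSum, Finset.mul_sum, hfdef]
    push_cast
    refine Finset.sum_congr rfl fun k hk => ?_
    have hkK : k ≤ K := by simpa [Nat.lt_succ_iff] using hk
    simp only [eval_add, eval_mul, eval_C, eval_pow, eval_X, ← Complex.exp_nat_mul]
    have e1 : Complex.exp (-(K * (x * Complex.I))) * Complex.exp (((K + k : ℕ) : ℂ) * (x * Complex.I))
        = Complex.cos (k * x) + Complex.sin (k * x) * Complex.I := by
      rw [← Complex.exp_add, ← Complex.exp_mul_I]; push_cast; ring_nf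
    have e2 : Complex.exp (-(K * (x * Complex.I))) * Complex.exp (((K - k : ℕ) : ℂ) * (x * Complex.I))
        = Complex.cos (k * x) - Complex.sin (k * x) * Complex.I := by
      have : Complex.cos (k * x) - Complex.sin (k * x) * Complex.I
        = Complex.cos (-(k * x)) + Complex.sin (-(k * x)) * Complex.I := by
          rw [Complex.cos_neg, Complex.sin_neg]; ring
      rw [this, ← Complex.exp_add, ← Complex.exp_mul_I, Nat.cast_sub hkK]; ring_nf
    linear_combination (-(((a k : ℂ) - b k * Complex.I) / 2)) * e1
      - (((a k : ℂ) + b k * Complex.I) / 2) * e2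
      + (b k * Complex.sin (k * x)) * Complex.I_sq
  have hP0 : P ≠ 0 := by
    intro h0
    obtain ⟨x, hx⟩ := h
    apply hx
    have := hf x
    rw [h0] at this
    simp only [eval_zero, mul_zero] at this
    exact_mod_cast this
  have hdeg : P.natDegree ≤ 2 * K := by
    refine natDegree_sum_le_of_forall_le _ _ fun k hk => ?_
    have hkK : k ≤ K := by simpa [Nat.lt_succ_iff] using hk
    refine (natDegree_add_le _ _).trans (max_le ?_ ?_)
    · exact (natDegree_C_mul_X_pow_le _ _).trans (by omega)
    · exact (natDegree_C_mul_X_pow_le _ _).trans (by omega)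
  have hm : ∀ x : ℝ, f x = 0 →
      zeroMult f x ≤ P.rootMultiplicity (Complex.exp (x * Complex.I)) := by
    intro x hx
    rw [le_rootMultiplicity_iff hP0]
    refine trig_aux_dvd K x _ f P hf fun j hj => ?_
    rcases Nat.eq_zero_or_pos j with rfl | hj0
    · simpa using hx
    · by_contra hne
      exact absurd (Nat.sInf_le (show j ∈ {n : ℕ | 1 ≤ n ∧ iteratedDeriv n f x ≠ 0} from
        ⟨hj0, hne⟩)) (not_le.2 hj)
  unfold Zcount
  rw [ENNReal.tsum_eq_iSup_sum]
  refine iSup_le fun s => ?_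
  have hinj : ∀ x ∈ s, ∀ y ∈ s, Complex.exp ((x.1 : ℝ) * Complex.I) =
      Complex.exp ((y.1 : ℝ) * Complex.I) → x = y := by
    intro x _ y _ hxy
    obtain ⟨n, hn⟩ := Complex.exp_eq_exp_iff_exists_int.1 hxy
    have h1 : x.1 = y.1 + n * (2 * π) := by
      have := congrArg Complex.im hn
      simpa using this
    have hx := x.2.1
    have hy := y.2.1
    have hpi := Real.pi_pos
    have h2 : (n : ℝ) < 1 := by
      by_contra hc; push Not at hc; nlinarith [hx.2, hy.1]
    have h3 : (-1 : ℝ) < n := by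
      by_contra hc; push Not at hc; nlinarith [hx.1, hy.2]
    have h4 : n = 0 := by
      have : n < 1 := by exact_mod_cast h2
      have : -1 < n := by exact_mod_cast h3
      omega
    apply Subtype.ext
    simpa [h4] using h1
  have key : ∑ x ∈ s, zeroMult f x.1 ≤ 2 * K := by
    classical
    calc ∑ x ∈ s, zeroMult f x.1
        ≤ ∑ x ∈ s, P.roots.count (Complex.exp ((x.1 : ℝ) * Complex.I)) :=
          Finset.sum_le_sum fun x _ => by rw [count_roots]; exact hm x.1 x.2.2
      _ = ∑ z ∈ s.image (fun x => Complex.exp ((x.1 : ℝ) * Complex.I)), P.roots.count z :=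
          by
          rw [Finset.sum_image]
          exact fun x hx y hy hxy => hinj x hx y hy hxy
      _ ≤ ∑ z ∈ P.roots.toFinset, P.roots.count z := by
          refine Finset.sum_le_sum_of_ne_zero fun z _ hz => ?_
          rw [Multiset.mem_toFinset]
          exact Multiset.count_ne_zero.1 hz
      _ = P.roots.card := Multiset.toFinset_sum_count_eq _
      _ ≤ P.natDegree := card_roots' P
      _ ≤ 2 * K := hdeg
  exact_mod_cast key
end

section
/- Let K ≥ 1 and let a = (a_0, ..., a_K) be a nonzero vector of real numbers that is palindromic, i.e., a_k = a_{K−k} for all 0 ≤ k ≤ K. Then the cosine polynomial C_a(x) = ∑_{k=0}^{K} a_k cos(kx) satisfies Z(C_a) ≥ K, where Z(f) denotes the number of zeros of f in [0, 2π) counted with multiplicity. -/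
open Real Set
open scoped ENNReal

lemma pal_iter (K : ℕ) (a : Fin (K + 1) → ℝ) (n : ℕ) :
    iteratedDeriv n (fun x : ℝ => ∑ k : Fin (K + 1), a k * Real.cos ((k : ℕ) * x)) =
      fun x : ℝ => ∑ k : Fin (K + 1), a k * ((k : ℕ) : ℝ) ^ n *
        Real.cos ((k : ℕ) * x + n * (π / 2)) := by
  induction n with
  | zero => funext x; simp
  | succ n ih =>
    rw [iteratedDeriv_succ, ih]
    funext x
    apply HasDerivAt.deriv
    apply HasDerivAt.fun_sum
    intro k _
    have h1 : HasDerivAt (fun x : ℝ => ((k : ℕ) : ℝ) * x + n * (π / 2)) ((k : ℕ) : ℝ) x := by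
      simpa using ((hasDerivAt_id x).const_mul ((k : ℕ) : ℝ)).add_const (n * (π / 2))
    have h2 := (h1.cos).const_mul (a k * ((k : ℕ) : ℝ) ^ n)
    refine h2.congr_deriv ?_
    have : ((k : ℕ) : ℝ) * x + ((n + 1 : ℕ) : ℝ) * (π / 2)
        = (((k : ℕ) : ℝ) * x + n * (π / 2)) + π / 2 := by push_cast; ring
    rw [this, Real.cos_add_pi_div_two]
    ring

lemma pal_nonvanish (K : ℕ) (a : Fin (K + 1) → ℝ) (x : ℝ)
    (h : ∀ n, iteratedDeriv n
      (fun x : ℝ => ∑ k : Fin (K + 1), a k * Real.cos ((k : ℕ) * x)) x = 0) : a = 0 := by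
  have hinj : Function.Injective (fun k : Fin (K + 1) => ((k : ℕ) : ℝ) ^ 2) := by
    intro i j hij
    have := (sq_eq_sq₀ (Nat.cast_nonneg (α := ℝ) (i : ℕ)) (Nat.cast_nonneg (j : ℕ))).1 hij
    exact Fin.ext (by exact_mod_cast this)
  have hc : (fun k : Fin (K + 1) => a k * Real.cos ((k : ℕ) * x)) = 0 := by
    apply Matrix.eq_zero_of_forall_pow_sum_mul_pow_eq_zero hinj
    intro m
    have hm := h (2 * (m : ℕ))
    rw [pal_iter] at hm
    have e : ∀ k : Fin (K + 1), a k * ((k : ℕ) : ℝ) ^ (2 * (m : ℕ)) *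
        Real.cos ((k : ℕ) * x + ((2 * (m : ℕ) : ℕ) : ℝ) * (π / 2)) =
        (-1) ^ (m : ℕ) * (a k * Real.cos ((k : ℕ) * x) * (((k : ℕ) : ℝ) ^ 2) ^ (m : ℕ)) := by
      intro k
      have : ((k : ℕ) : ℝ) * x + ((2 * (m : ℕ) : ℕ) : ℝ) * (π / 2)
        = ((k : ℕ) : ℝ) * x + (m : ℕ) * π := by push_cast; ring
      rw [this, Real.cos_add_nat_mul_pi, pow_mul]
      ring
    simp only [e, ← Finset.mul_sum] at hm
    exact (mul_eq_zero.1 hm).resolve_left (by simp)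
  have hs : (fun k : Fin (K + 1) => a k * ((k : ℕ) : ℝ) * Real.sin ((k : ℕ) * x)) = 0 := by
    apply Matrix.eq_zero_of_forall_pow_sum_mul_pow_eq_zero hinj
    intro m
    have hm := h (2 * (m : ℕ) + 1)
    rw [pal_iter] at hm
    have e : ∀ k : Fin (K + 1), a k * ((k : ℕ) : ℝ) ^ (2 * (m : ℕ) + 1) *
        Real.cos ((k : ℕ) * x + ((2 * (m : ℕ) + 1 : ℕ) : ℝ) * (π / 2)) =
        -(-1) ^ (m : ℕ) * (a k * ((k : ℕ) : ℝ) * Real.sin ((k : ℕ) * x) *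
          (((k : ℕ) : ℝ) ^ 2) ^ (m : ℕ)) := by
      intro k
      have : ((k : ℕ) : ℝ) * x + ((2 * (m : ℕ) + 1 : ℕ) : ℝ) * (π / 2)
        = (((k : ℕ) : ℝ) * x + (m : ℕ) * π) + π / 2 := by push_cast; ring
      rw [this, Real.cos_add_pi_div_two, Real.sin_add_nat_mul_pi, pow_succ, pow_mul]
      ring
    simp only [e, ← Finset.mul_sum] at hm
    exact (mul_eq_zero.1 hm).resolve_left (by simp)
  funext k
  have h1 : a k * Real.cos ((k : ℕ) * x) = 0 := congrFun hc k
  have h2 : a k * ((k : ℕ) : ℝ) * Real.sin ((k : ℕ) * x) = 0 := congrFun hs k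
  by_cases hk : ((k : ℕ) : ℝ) = 0
  · rw [hk] at h1; simpa using h1
  · by_contra hne
    have hne' : a k ≠ 0 := hne
    have c0 := (mul_eq_zero.1 h1).resolve_left hne'
    have s0 := (mul_eq_zero.1 h2).resolve_left (mul_ne_zero hne' hk)
    have := Real.sin_sq_add_cos_sq (((k : ℕ) : ℝ) * x)
    rw [c0, s0] at this
    norm_num at this

lemma pal_zero (K : ℕ) (a : Fin (K + 1) → ℝ)
    (hpal : ∀ k : Fin (K + 1), a k = a (Fin.rev k)) (j : ℕ) (x : ℝ)
    (hx : (K : ℝ) * x = j * (2 * π) + π) :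
    ∑ k : Fin (K + 1), a k * Real.cos ((k : ℕ) * x) = 0 := by
  have h : ∑ k : Fin (K + 1), a k * Real.cos ((k : ℕ) * x) =
      ∑ k : Fin (K + 1), -(a k * Real.cos ((k : ℕ) * x)) := by
    rw [← Equiv.sum_comp Fin.revPerm]
    apply Finset.sum_congr rfl
    intro k _
    have hv : (((Fin.rev k : Fin (K + 1)) : ℕ) : ℝ) = K - (k : ℕ) := by
      rw [Fin.val_rev]
      have := k.2
      rw [Nat.cast_sub (by omega)]
      push_cast; ring
    rw [Fin.revPerm_apply, ← hpal, hv]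
    have : ((K : ℝ) - (k : ℕ)) * x = (π - (k : ℕ) * x) + j * (2 * π) := by
      rw [sub_mul, hx]; ring
    rw [this, Real.cos_add_nat_mul_two_pi, Real.cos_pi_sub]
    ring
  rw [Finset.sum_neg_distrib] at h
  linarith

theorem palindromic_coeff_cosine_zero_count (K : ℕ) (hK : 1 ≤ K)
    (a : Fin (K + 1) → ℝ) (ha : a ≠ 0)
    (hpal : ∀ k : Fin (K + 1), a k = a (Fin.rev k)) :
    (K : ℝ≥0∞) ≤ Zcount (fun x => ∑ k : Fin (K + 1), a k * Real.cos ((k : ℕ) * x)) := by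
  have hK0 : (0 : ℝ) < K := by exact_mod_cast hK
  have hpi := Real.pi_pos
  set f : ℝ → ℝ := fun x => ∑ k : Fin (K + 1), a k * Real.cos ((k : ℕ) * x) with hf
  have hmult : ∀ x, f x = 0 → 1 ≤ zeroMult f x := by
    intro x hx
    have hne : {n : ℕ | 1 ≤ n ∧ iteratedDeriv n f x ≠ 0}.Nonempty := by
      by_contra hemp
      apply ha
      apply pal_nonvanish K a x
      intro n
      by_contra hn
      rcases Nat.eq_zero_or_pos n with h0 | h0
      · subst h0
        exact hn (by rw [iteratedDeriv_zero]; exact hx)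
      · exact hemp ⟨n, h0, hn⟩
    exact (Nat.sInf_mem hne).1
  have hKx : ∀ j : ℕ, (K : ℝ) * ((j * (2 * π) + π) / K) = j * (2 * π) + π := by
    intro j; field_simp
  let g : Fin K → {x : ℝ // x ∈ Set.Ico (0 : ℝ) (2 * Real.pi) ∧ f x = 0} := fun j =>
    ⟨(((j : ℕ) : ℝ) * (2 * π) + π) / K, by
      refine ⟨⟨by positivity, ?_⟩, pal_zero K a hpal j _ (hKx j)⟩
      rw [div_lt_iff₀ hK0]
      have : ((j : ℕ) : ℝ) + 1 ≤ K := by exact_mod_cast j.2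
      nlinarith⟩
  have hg : Function.Injective g := by
    intro i j hij
    have h1 : (((i : ℕ) : ℝ) * (2 * π) + π) / K = (((j : ℕ) : ℝ) * (2 * π) + π) / K :=
      congrArg Subtype.val hij
    have h2 := (hKx i).symm.trans ((congrArg (fun t => (K : ℝ) * t) h1).trans (hKx j))
    have h3 : ((i : ℕ) : ℝ) = (j : ℕ) :=
      mul_right_cancel₀ (b := 2 * π) (by positivity) (by linarith)
    exact Fin.ext (by exact_mod_cast h3)
  unfold Zcount
  calc (K : ℝ≥0∞) = ∑' _ : Fin K, (1 : ℝ≥0∞) := by simp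
    _ ≤ ∑' j : Fin K, (zeroMult f (g j).1 : ℝ≥0∞) := by
        apply ENNReal.tsum_le_tsum
        intro j
        exact_mod_cast hmult _ (g j).2.2
    _ ≤ _ := ENNReal.tsum_comp_le_tsum_of_injective hg _
end
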